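/- Let d ≥ 2 and c ≥ 1 be fixed integers and C > 0 a fixed constant. There exists a constant K, depending only on d, c and C, such that the following holds. For every integer b ≥ 1, every finite alphabet Σ, and every finite key set X ⊆ Σ^c, set g = 2^b and n = d·g and suppose |X| = m ≤ C·n. Let h_1,…,h_d : Σ^c → F₂^b ≅ [g] be d independent random simple tabulation hash functions, and insert the keys of X into the n bins [g]×{1,…,d} by the d-choice paradigm using the Always-Go-Left tie-breaking algorithm. Then for every insertion order, the expectation over the random hash functions of the maximum load is at most log₂ log₂ n / (d · log₂ φ_d) + K. -/

import Mathlib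

/-!
Identify a key with its set of position characters, as a vector over `F₂`. Random tables hash
linearly independent combinations of position characters independently and uniformly
(`kill_card`, `pr_kill`), so for independent keys the collisions along the edges of a tree of keys
have the same probability as under full randomness. Only dependencies are an obstacle.

*Witness trees.* Give a key of height `η` in a bin of group `j` the rank `d * η + j`. Under
Always-Go-Left, the bins offered to a key contain keys of all smaller ranks (`exists_child`). Hence
above a key of large height there is a tree whose inner vertices are chains of rank differences
such that consecutive keys lie in different groups, with `K` leaves in each bin offered
to an inner key (`slotTree`, `exists_witness`). The number of chains grows like
`φ_d ^ (d * s)` in the number `s` of rounds, since it satisfies the `d`-step Fibonacci recurrence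
(`numChains_add`). If the keys of the tree are independent, the union bound over all layouts gains
a factor `K!` for every leaf bin, as the leaves can be permuted (`pr_clean_mul_le`); once the tree
has a constant fraction of `b` slots, this is enough for an arbitrary constant factor per slot.

*Dependencies.* A large load yields five such trees with independent roots in a common bin, because
the span of a bounded number of keys contains a bounded number of keys (`exists_indep`). Take a
maximal independent set of slots that is closed under parents. Either it contains one of the trees,
or in each of the trees some key is a sum of an odd number of keys of the set. In the latter case
(`dichotomy`) there are enough coincidences to code the event by `BadCode` or `Heavy`. These are
rare because sums of several keys are seldom keys: at most `720 ^ c * m ^ 3` six-tuples of keys of `X`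
with `m = |X|` have sum zero (`sum_zero_key_le`, `cnt_six_zero`), which bounds the number of
assignments in each case. The probabilities obtained decay exponentially in `b`, even after
the union over the `2 ^ O(slots)` codes.

*Expectation.* Loads above `b ^ c` need `b + 1` independent keys with a common hash value and have
a contribution that is bounded by a constant (`huge_term_le`). Loads up to `b ^ c` that exceed
`K + s` by a constant have probability exponentially small in `b` (`load_term_le`). Choosing `s`
such that `(φ_d ^ d) ^ s` is about `b` makes the tree as large as required, and gives
`s ≤ log₂ log₂ n / (d * log₂ φ_d)` (`rounds_le`).
-/

/-- Simple tabulation: the hash of `x` is the XOR (sum over `F₂`) of the table entries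
`T i (x i)`. -/
def simpleTab {c b : ℕ} {A : Type*} (T : Fin c → A → (Fin b → ZMod 2)) (x : Fin c → A) :
    Fin b → ZMod 2 := ∑ i, T i (x i)

/-- The load of the bin `bin` after the keys of the list `P` have been placed, where key `y`
was placed in bin `(h (σ y) y, σ y)`. -/
def loadAt {α β : Type*} [DecidableEq β] {d : ℕ} (h : Fin d → α → β)
    (σ : α → Fin d) (P : List α) (bin : β × Fin d) : ℕ :=
  (P.filter fun y => decide ((h (σ y) y, σ y) = bin)).length

/-- `σ` records, for each key, which of its `d` choices it used.  It is a valid run of the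
`d`-choice paradigm with insertion order `L` if each key went into one of its `d` bins of
minimal load at the time of its insertion. -/
def validPlacement {α β : Type*} [DecidableEq β] {d : ℕ} (h : Fin d → α → β)
    (L : List α) (σ : α → Fin d) : Prop :=
  ∀ (t : Fin L.length) (j : Fin d),
    loadAt h σ (L.take t) (h (σ (L.get t)) (L.get t), σ (L.get t)) ≤
      loadAt h σ (L.take t) (h j (L.get t), j)

/-- A run of the `d`-choice paradigm with the Always-Go-Left tie-breaking rule: each key
goes to a bin of minimal load, and any group of strictly smaller index has strictly
larger load. -/
def alwaysGoLeftPlacement {α β : Type*} [DecidableEq β] {d : ℕ} (h : Fin d → α → β)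
    (L : List α) (σ : α → Fin d) : Prop :=
  validPlacement h L σ ∧
    ∀ (t : Fin L.length) (j : Fin d), j < σ (L.get t) →
      loadAt h σ (L.take t) (h (σ (L.get t)) (L.get t), σ (L.get t)) <
        loadAt h σ (L.take t) (h j (L.get t), j)

/-- The maximum load of a bin after all keys of `L` have been inserted. -/
def maxLoad {α β : Type*} [DecidableEq β] [Fintype β] {d : ℕ} (h : Fin d → α → β)
    (L : List α) (σ : α → Fin d) : ℕ :=
  Finset.univ.sup fun bin : β × Fin d => loadAt h σ L bin

/-! ### Keys as vectors and independent hash values -/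

namespace TabChoice

/-- All `d`-tuples of tables of simple tabulation hash functions. -/
abbrev Tabs (d c b : ℕ) (A : Type) := Fin d → Fin c → A → (Fin b → ZMod 2)

/-- The space in which a key becomes its set of position characters. -/
abbrev Vec (c : ℕ) (A : Type) := Fin c → A → ZMod 2

section basic

variable {d c b : ℕ} {A : Type} [Fintype A] [DecidableEq A]

/-- The indicator vector of the position characters of a key. -/
def vec (x : Fin c → A) : Vec c A := fun i a => if x i = a then 1 else 0

omit [Fintype A] in
lemma vec_injective : Function.Injective (vec : (Fin c → A) → Vec c A) := by
  intro x y h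
  funext i
  have := congrFun (congrFun h i) (x i)
  simp only [vec, if_true] at this
  by_contra hne
  rw [if_neg (fun h => hne h.symm)] at this
  exact one_ne_zero this

/-- Formal combinations of position characters, one component per hash function, are sent by
the tables `T` to bit strings. -/
def ev (T : Tabs d c b A) : (Fin d → Vec c A) →ₗ[ZMod 2] (Fin b → ZMod 2) where
  toFun w := ∑ j, ∑ i, ∑ a, w j i a • T j i a
  map_add' w w' := by
    simp only [Pi.add_apply, add_smul, Finset.sum_add_distrib]
  map_smul' r w := by
    simp only [Pi.smul_apply, smul_assoc, Finset.smul_sum, RingHom.id_apply]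

lemma ev_single_vec (T : Tabs d c b A) (j : Fin d) (x : Fin c → A) :
    ev T (Pi.single j (vec x)) = simpleTab (T j) x := by
  simp only [ev, LinearMap.coe_mk, AddHom.coe_mk, simpleTab]
  rw [Finset.sum_eq_single j]
  · refine Finset.sum_congr rfl fun i _ => ?_
    rw [Finset.sum_eq_single (x i)]
    · simp [vec]
    · intro a _ ha
      simp [vec, ha.symm]
    · simp
  · intro k _ hk
    simp [Pi.single_eq_of_ne hk]
  · simp

/-- Independent combinations of position characters are hashed independently and uniformly. -/
lemma kill_card {ι : Type*} [Fintype ι] [DecidableEq ι] (w : ι → Fin d → Vec c A)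
    (hw : LinearIndependent (ZMod 2) w) :
    (Finset.univ.filter fun T : Tabs d c b A => ∀ e, ev T (w e) = 0).card *
      (2 ^ b) ^ Fintype.card ι = Fintype.card (Tabs d c b A) := by
  let Φ : Tabs d c b A →ₗ[ZMod 2] (ι → (Fin b → ZMod 2)) :=
    { toFun := fun T e => ev T (w e)
      map_add' := by
        intro T T'; funext e
        simp [ev, smul_add, Finset.sum_add_distrib]
      map_smul' := by
        intro r T; funext e
        simp only [ev, Pi.smul_apply, LinearMap.coe_mk, AddHom.coe_mk, Finset.smul_sum,
          RingHom.id_apply]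
        simp only [smul_comm r] }
  have hsurj : Function.Surjective Φ := by
    intro y
    have hf : ∀ β : Fin b, ∃ f : (Fin d → Vec c A) →ₗ[ZMod 2] ZMod 2, ∀ e, f (w e) = y e β := by
      intro β
      obtain ⟨f, hf⟩ := LinearMap.exists_extend
        (((Finsupp.lift (ZMod 2) (ZMod 2) ι) fun e => y e β).comp
          hw.linearCombinationEquiv.symm.toLinearMap)
      refine ⟨f, fun e => ?_⟩
      have h1 := LinearMap.congr_fun hf ⟨w e, Submodule.subset_span ⟨e, rfl⟩⟩
      simp only [LinearMap.comp_apply, Submodule.subtype_apply] at h1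
      rw [h1]
      have h2 : hw.linearCombinationEquiv.symm ⟨w e, Submodule.subset_span ⟨e, rfl⟩⟩
          = Finsupp.single e 1 := by
        rw [LinearEquiv.symm_apply_eq]
        apply Subtype.ext
        simp
      simp [h2]
    choose f hf using hf
    refine ⟨fun j i a β => f β (Pi.single j (Pi.single i (Pi.single a 1))), ?_⟩
    funext e β
    rw [← hf β e]
    have h3 : w e = ∑ j, ∑ i, ∑ a, w e j i a •
        (Pi.single j (Pi.single i (Pi.single a 1)) : Fin d → Vec c A) := by
      funext j i a
      simp [Finset.sum_apply, Pi.single_apply, Finset.sum_ite_eq, ite_apply,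
        apply_ite, Finset.sum_ite_irrel]
    conv_rhs => rw [h3]
    simp [Φ, ev, map_sum]
  have h1 := Submodule.card_eq_card_quotient_mul_card (LinearMap.ker Φ)
  rw [Nat.card_congr (Φ.quotKerEquivOfSurjective hsurj).toEquiv, Nat.card_eq_fintype_card] at h1
  rw [h1]
  congr 1
  · rw [← Fintype.card_subtype, ← Nat.card_eq_fintype_card]
    refine Nat.card_congr (Equiv.subtypeEquivRight fun T => ?_)
    rw [LinearMap.mem_ker]
    exact ⟨fun h => funext h, fun h e => congrFun h e⟩
  · simp

open Classical in
/-- Probability of an event over uniformly random tables. -/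
noncomputable def pr (P : Tabs d c b A → Prop) : ℝ :=
  ((Finset.univ.filter P).card : ℝ) / (Fintype.card (Tabs d c b A) : ℝ)

lemma pr_eq (P : Tabs d c b A → Prop) [DecidablePred P] :
    pr P = ((Finset.univ.filter P).card : ℝ) / (Fintype.card (Tabs d c b A) : ℝ) := by
  unfold pr
  congr!

lemma card_pos_tabs : (0 : ℝ) < (Fintype.card (Tabs d c b A) : ℝ) := by
  exact_mod_cast Fintype.card_pos

lemma pr_nonneg (P : Tabs d c b A → Prop) : 0 ≤ pr P := by
  unfold pr; positivity

lemma pr_mono {P Q : Tabs d c b A → Prop} (h : ∀ T, P T → Q T) : pr P ≤ pr Q := by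
  classical
  unfold pr
  gcongr
  exact h _

lemma pr_or_le (P Q : Tabs d c b A → Prop) : pr (fun T => P T ∨ Q T) ≤ pr P + pr Q := by
  classical
  simp only [pr_eq]
  rw [← add_div]
  gcongr
  rw [Finset.filter_or]
  exact_mod_cast Finset.card_union_le _ _

lemma pr_exists_le {ι : Type*} (s : Finset ι) (P : ι → Tabs d c b A → Prop) :
    pr (fun T => ∃ i ∈ s, P i T) ≤ ∑ i ∈ s, pr (P i) := by
  classical
  simp only [pr_eq]
  rw [← Finset.sum_div]
  gcongr
  have : (Finset.univ.filter fun T : Tabs d c b A => ∃ i ∈ s, P i T) =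
      s.biUnion fun i => Finset.univ.filter (P i) := by
    ext T; simp
  rw [this]
  exact_mod_cast Finset.card_biUnion_le

/-- Union bound with a uniform bound on the summands. -/
lemma pr_exists_le_card {ι : Type*} (s : Finset ι) (P : ι → Tabs d c b A → Prop) (B : ℝ)
    (h : ∀ i ∈ s, pr (P i) ≤ B) : pr (fun T => ∃ i ∈ s, P i T) ≤ s.card * B := by
  refine (pr_exists_le s P).trans ((Finset.sum_le_sum h).trans ?_)
  simp

lemma pr_kill {ι : Type*} [Fintype ι] (w : ι → Fin d → Vec c A)
    (hw : LinearIndependent (ZMod 2) w) :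
    pr (fun T : Tabs d c b A => ∀ e, ev T (w e) = 0) = 1 / (2 ^ b : ℝ) ^ Fintype.card ι := by
  classical
  have h := kill_card (b := b) w hw
  have h0 : (0 : ℝ) < (Fintype.card (Tabs d c b A) : ℝ) := card_pos_tabs
  unfold pr
  rw [div_eq_div_iff h0.ne' (by positivity), one_mul, ← h]
  push_cast
  congr!

/-- First-moment bound: the event that a configuration with property `Q` has all its independent
combinations hashed to zero. -/
lemma pr_first_moment {Y ι : Type*} [Fintype Y] [Fintype ι] (Q : Y → Prop) [DecidablePred Q]
    (w : Y → ι → Fin d → Vec c A) :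
    pr (fun T : Tabs d c b A => ∃ y, Q y ∧ LinearIndependent (ZMod 2) (w y) ∧
      ∀ e, ev T (w y e) = 0) ≤
      ((Finset.univ.filter Q).card : ℝ) / (2 ^ b : ℝ) ^ Fintype.card ι := by
  classical
  have h := pr_exists_le_card (Finset.univ.filter Q)
    (fun y (T : Tabs d c b A) => LinearIndependent (ZMod 2) (w y) ∧ ∀ e, ev T (w y e) = 0)
    (1 / (2 ^ b : ℝ) ^ Fintype.card ι) (by
      intro y _
      by_cases hl : LinearIndependent (ZMod 2) (w y)
      · rw [← pr_kill (b := b) (w y) hl]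
        exact pr_mono fun T h => h.2
      · have : pr (fun T : Tabs d c b A => LinearIndependent (ZMod 2) (w y) ∧
            ∀ e, ev T (w y e) = 0) = 0 := by
          unfold pr
          simp [hl]
        rw [this]; positivity)
  rw [mul_one_div] at h
  refine le_trans (pr_mono ?_) h
  rintro T ⟨y, hy, h⟩
  exact ⟨y, by simpa using hy, h⟩

end basic

end TabChoice

/-! ### The six-fold zero-sum inequality -/

namespace TabChoice

section zerosum

variable {A : Type} [Fintype A] [DecidableEq A]

omit [Fintype A] in
/-- In a family of characters in which each character occurs an even number of times, each
member has a partner. -/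
lemma exists_partner {s : Finset (Fin 6)} {α : Fin 6 → A}
    (h : ∀ a, ∑ k ∈ s, (if α k = a then (1 : ZMod 2) else 0) = 0) {i : Fin 6} (hi : i ∈ s) :
    ∃ k ∈ s.erase i, α k = α i ∧
      ∀ a, ∑ k ∈ (s.erase i).erase k, (if α k = a then (1 : ZMod 2) else 0) = 0 := by
  have h1 : ∃ k ∈ s.erase i, α k = α i := by
    by_contra hne
    push Not at hne
    have h2 := h (α i)
    rw [← Finset.add_sum_erase _ _ hi, Finset.sum_eq_zero (fun k hk => if_neg (hne k hk))] at h2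
    simp at h2
  obtain ⟨k, hk, hki⟩ := h1
  refine ⟨k, hk, hki, fun a => ?_⟩
  have h2 := h a
  rw [← Finset.add_sum_erase _ _ hi, ← Finset.add_sum_erase _ _ hk, hki, ← add_assoc,
    CharTwo.add_self_eq_zero, zero_add] at h2
  exact h2

omit [Fintype A] in
/-- Six characters, each of which occurs an even number of times, can be paired up. -/
lemma exists_pairing {α : Fin 6 → A}
    (h : ∀ a, ∑ k, (if α k = a then (1 : ZMod 2) else 0) = 0) :
    ∃ e : Equiv.Perm (Fin 6), α (e 0) = α (e 1) ∧ α (e 2) = α (e 3) ∧ α (e 4) = α (e 5) := by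
  obtain ⟨k0, hk0, e0, h0⟩ := exists_partner h (Finset.mem_univ 0)
  have c0 : ((Finset.univ.erase (0 : Fin 6)).erase k0).card = 4 := by
    rw [Finset.card_erase_of_mem hk0]; simp
  obtain ⟨i1, hi1⟩ := Finset.card_pos.1 (by rw [c0]; norm_num)
  obtain ⟨k1, hk1, e1, h1⟩ := exists_partner h0 hi1
  have c1 : ((((Finset.univ.erase (0 : Fin 6)).erase k0).erase i1).erase k1).card = 2 := by
    rw [Finset.card_erase_of_mem hk1, Finset.card_erase_of_mem hi1, c0]
  obtain ⟨i2, hi2⟩ := Finset.card_pos.1 (by rw [c1]; norm_num)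
  obtain ⟨k2, hk2, e2, h2⟩ := exists_partner h1 hi2
  simp only [Finset.mem_erase, Finset.mem_univ, and_true] at hk0 hi1 hk1 hi2 hk2
  have hinj : Function.Injective ![0, k0, i1, k1, i2, k2] := by
    intro a b hab
    fin_cases a <;> fin_cases b <;> simp_all
  refine ⟨Equiv.ofBijective _ (Finite.injective_iff_bijective.1 hinj), ?_⟩
  simp [Equiv.ofBijective_apply, e0, e1, e2]

/-- For a fixed pairing, Cauchy–Schwarz in each of the three pairs. -/
lemma sum_paired_le (f : Fin 6 → A → ℝ) (hf : ∀ k a, 0 ≤ f k a) (e : Equiv.Perm (Fin 6)) :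
    ∑ α : Fin 6 → A, (if α (e 0) = α (e 1) ∧ α (e 2) = α (e 3) ∧ α (e 4) = α (e 5) then
      ∏ k, f k (α k) else 0) ≤ ∏ k, √(∑ a, f k a ^ 2) := by
  have h1 : ∑ α : Fin 6 → A, (if α (e 0) = α (e 1) ∧ α (e 2) = α (e 3) ∧ α (e 4) = α (e 5) then
      ∏ k, f k (α k) else 0) = ∑ β : Fin 6 → A, (if β 0 = β 1 ∧ β 2 = β 3 ∧ β 4 = β 5 then
      ∏ k, f (e k) (β k) else 0) := by
    refine Fintype.sum_equiv (Equiv.arrowCongr e.symm (Equiv.refl A)) _ _ fun α => ?_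
    simp only [Equiv.arrowCongr_apply, Equiv.symm_symm, Function.comp, Equiv.refl_apply]
    rw [← Equiv.prod_comp e (fun k => f k (α k))]
  have h2 : ∑ β : Fin 6 → A, (if β 0 = β 1 ∧ β 2 = β 3 ∧ β 4 = β 5 then
      ∏ k, f (e k) (β k) else 0) = (∑ a, f (e 0) a * f (e 1) a) *
        (∑ a, f (e 2) a * f (e 3) a) * ∑ a, f (e 4) a * f (e 5) a := by
    rw [Finset.sum_mul_sum, Finset.sum_mul]
    simp_rw [Finset.sum_mul_sum]
    rw [← Finset.sum_filter]
    simp_rw [← Fintype.sum_prod_type']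
    symm
    refine Finset.sum_bij (fun p _ => ![p.1, p.1, p.2.1, p.2.1, p.2.2, p.2.2]) ?_ ?_ ?_ ?_
    · intro p _; simp
    · rintro ⟨a, b, c⟩ _ ⟨a', b', c'⟩ _ h
      have h0 := congrFun h 0
      have h2 := congrFun h 2
      have h4 := congrFun h 4
      simp at h0 h2 h4
      simp [h0, h2, h4]
    · intro β hβ
      simp only [Finset.mem_filter, Finset.mem_univ, true_and] at hβ
      refine ⟨(β 0, β 2, β 4), Finset.mem_univ _, ?_⟩
      funext k
      fin_cases k <;> simp [hβ]
    · intro p _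
      simp [Fin.prod_univ_succ]
      ring
  rw [h1, h2, ← Equiv.prod_comp e]
  have cs : ∀ i j, ∑ a, f i a * f j a ≤ √(∑ a, f i a ^ 2) * √(∑ a, f j a ^ 2) := fun i j =>
    Real.sum_mul_le_sqrt_mul_sqrt _ _ _
  have nn : ∀ i j, 0 ≤ ∑ a, f i a * f j a := fun i j =>
    Finset.sum_nonneg fun a _ => mul_nonneg (hf _ _) (hf _ _)
  have h3 : ∏ k, √(∑ a, f (e k) a ^ 2) = (√(∑ a, f (e 0) a ^ 2) * √(∑ a, f (e 1) a ^ 2)) *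
      (√(∑ a, f (e 2) a ^ 2) * √(∑ a, f (e 3) a ^ 2)) *
      (√(∑ a, f (e 4) a ^ 2) * √(∑ a, f (e 5) a ^ 2)) := by
    simp [Fin.prod_univ_succ]
    ring
  rw [h3]
  gcongr
  all_goals first | exact nn _ _ | exact cs _ _

/-- The six-fold inequality for a single position: the union bound over the pairings, which are
encoded by the `720` orderings of the six indices. -/
lemma sum_zero_char_le (f : Fin 6 → A → ℝ) (hf : ∀ k a, 0 ≤ f k a) :
    ∑ α : Fin 6 → A, (if (∀ a, ∑ k, (if α k = a then (1 : ZMod 2) else 0) = 0) then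
      ∏ k, f k (α k) else 0) ≤ 720 * ∏ k, √(∑ a, f k a ^ 2) := by
  have h1 : ∀ α : Fin 6 → A, (if (∀ a, ∑ k, (if α k = a then (1 : ZMod 2) else 0) = 0) then
      ∏ k, f k (α k) else 0) ≤ ∑ e : Equiv.Perm (Fin 6),
        (if α (e 0) = α (e 1) ∧ α (e 2) = α (e 3) ∧ α (e 4) = α (e 5) then
          ∏ k, f k (α k) else 0) := by
    intro α
    have nn : ∀ e ∈ (Finset.univ : Finset (Equiv.Perm (Fin 6))), 0 ≤
        (if α (e 0) = α (e 1) ∧ α (e 2) = α (e 3) ∧ α (e 4) = α (e 5) then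
          ∏ k, f k (α k) else 0) := by
      intro e _
      split_ifs
      · exact Finset.prod_nonneg fun k _ => hf _ _
      · exact le_rfl
    split_ifs with h
    · obtain ⟨e, he⟩ := exists_pairing h
      refine le_trans ?_ (Finset.single_le_sum nn (Finset.mem_univ e))
      rw [if_pos he]
    · exact Finset.sum_nonneg nn
  refine (Finset.sum_le_sum fun α _ => h1 α).trans ?_
  rw [Finset.sum_comm]
  refine (Finset.sum_le_sum fun e _ => sum_paired_le f hf e).trans ?_
  simp [Fintype.card_perm, Nat.factorial]

/-- Six-fold zero-sum inequality for keys: each position contributes a factor `720`, the number of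
orderings of six indices, which overcounts the ways of pairing them up. -/
lemma sum_zero_key_le (c : ℕ) : ∀ (F : Fin 6 → (Fin c → A) → ℝ), (∀ k a, 0 ≤ F k a) →
    ∑ x : Fin 6 → (Fin c → A), (if ∑ k, vec (x k) = 0 then ∏ k, F k (x k) else 0) ≤
      720 ^ c * ∏ k, √(∑ a, F k a ^ 2) := by
  induction c with
  | zero =>
    intro F hF
    have : ∀ k, √(∑ a, F k a ^ 2) = F k default := by
      intro k
      rw [Fintype.sum_unique, Real.sqrt_sq (hF _ _)]
    simp only [this]
    rw [Fintype.sum_unique, if_pos (by ext i; exact i.elim0)]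
    simp [Subsingleton.elim _ (default : Fin 0 → A)]
  | succ c ih =>
    intro F hF
    have h1 : ∑ x : Fin 6 → (Fin (c + 1) → A), (if ∑ k, vec (x k) = 0 then ∏ k, F k (x k) else 0)
        = ∑ α : Fin 6 → A, ∑ y : Fin 6 → (Fin c → A),
          (if (∀ a, ∑ k, (if α k = a then (1 : ZMod 2) else 0) = 0) then
            (if ∑ k, vec (y k) = 0 then ∏ k, F k (Fin.cons (α k) (y k)) else 0) else 0) := by
      rw [← Fintype.sum_prod_type']
      symm
      refine Fintype.sum_equiv ((Equiv.arrowProdEquivProdArrow _ _ _).symm.trans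
        (Equiv.arrowCongr (Equiv.refl _) (Fin.consEquiv fun _ => A))) _ _ ?_
      rintro ⟨α, y⟩
      have hx : ∀ k, (((Equiv.arrowProdEquivProdArrow _ _ _).symm.trans
        (Equiv.arrowCongr (Equiv.refl _) (Fin.consEquiv fun _ => A))) (α, y)) k =
          (Fin.cons (α k) (y k) : Fin (c + 1) → A) := fun k => rfl
      simp only [hx]
      rw [← ite_and]
      refine if_congr ?_ rfl rfl
      have hs : (∑ k, vec (Fin.cons (α k) (y k) : Fin (c + 1) → A) = 0) ↔
          ∀ i a, ∑ k, (if (Fin.cons (α k) (y k) : Fin (c + 1) → A) i = a then (1 : ZMod 2)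
            else 0) = 0 := by
        simp [funext_iff, Finset.sum_apply, vec]
      have hs' : (∑ k, vec (y k) = 0) ↔
          ∀ i a, ∑ k, (if y k i = a then (1 : ZMod 2) else 0) = 0 := by
        simp [funext_iff, Finset.sum_apply, vec]
      rw [hs, hs', Fin.forall_fin_succ]
      simp only [Fin.cons_zero, Fin.cons_succ]
    rw [h1]
    have h2 : ∀ α : Fin 6 → A, ∑ y : Fin 6 → (Fin c → A),
          (if (∀ a, ∑ k, (if α k = a then (1 : ZMod 2) else 0) = 0) then
            (if ∑ k, vec (y k) = 0 then ∏ k, F k (Fin.cons (α k) (y k)) else 0) else 0) ≤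
        720 ^ c * (if (∀ a, ∑ k, (if α k = a then (1 : ZMod 2) else 0) = 0) then
          ∏ k, √(∑ y : Fin c → A, F k (Fin.cons (α k) y) ^ 2) else 0) := by
      intro α
      split_ifs
      · exact ih (fun k y => F k (Fin.cons (α k) y)) (fun k y => hF _ _)
      · simp
    refine (Finset.sum_le_sum fun α _ => h2 α).trans ?_
    rw [← Finset.mul_sum]
    have h3 := sum_zero_char_le (fun k a => √(∑ y : Fin c → A, F k (Fin.cons a y) ^ 2))
      (fun k a => Real.sqrt_nonneg _)
    have h4 : ∀ k, ∑ a, √(∑ y : Fin c → A, F k (Fin.cons a y) ^ 2) ^ 2 =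
        ∑ x : Fin (c + 1) → A, F k x ^ 2 := by
      intro k
      simp_rw [Real.sq_sqrt (Finset.sum_nonneg fun y _ => sq_nonneg (F k (Fin.cons _ y)))]
      rw [← Fintype.sum_prod_type']
      exact Fintype.sum_equiv (Fin.consEquiv fun _ => A) _ _ fun p => rfl
    simp only [h4] at h3
    rw [pow_succ, mul_assoc]
    gcongr

end zerosum

end TabChoice

/-! ### Tuples of keys with prescribed sum -/

namespace TabChoice

section counting

variable {c : ℕ} {A : Type} [Fintype A] [DecidableEq A]

/-- Number of `p`-tuples of keys of `X` whose vectors sum to `v`. -/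
def cnt (X : Finset (Fin c → A)) (p : ℕ) (v : Vec c A) : ℕ :=
  (Finset.univ.filter fun y : Fin p → X => ∑ i, vec (y i).1 = v).card

/-- `v` is the vector of a key of `X`. -/
def InX (X : Finset (Fin c → A)) (v : Vec c A) : Prop := ∃ a ∈ X, vec a = v

omit [Fintype A] [DecidableEq A] in
lemma add_eq_iff_eq_add {u v w : Vec c A} : u + v = w ↔ v = u + w := by
  constructor
  · rintro rfl; rw [← add_assoc, ZModModule.add_self, zero_add]
  · rintro rfl; rw [← add_assoc, ZModModule.add_self, zero_add]

lemma cnt_add (X : Finset (Fin c → A)) (p p' : ℕ) (u : Vec c A) :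
    cnt X (p + p') u = ∑ v, cnt X p v * cnt X p' (v + u) := by
  classical
  unfold cnt
  simp_rw [← Finset.card_product]
  rw [← Finset.card_sigma]
  symm
  refine Finset.card_bij (fun z _ => Fin.append z.2.1 z.2.2) ?_ ?_ ?_
  · rintro ⟨v, y, y'⟩ h
    simp only [Finset.mem_sigma, Finset.mem_univ, Finset.mem_product, Finset.mem_filter,
      true_and] at h ⊢
    simp only [Fin.sum_univ_add, Fin.append_left, Fin.append_right, h.1, h.2]
    rw [← add_assoc, ZModModule.add_self, zero_add]
  · rintro ⟨v, y, y'⟩ h ⟨w, z, z'⟩ h' he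
    simp only [Finset.mem_sigma, Finset.mem_univ, Finset.mem_product, Finset.mem_filter,
      true_and] at h h'
    have e1 := (Fin.appendEquiv (α := X) p p').injective (a₁ := (y, y')) (a₂ := (z, z')) he
    simp only [Prod.mk.injEq] at e1
    obtain ⟨rfl, rfl⟩ := e1
    obtain rfl : v = w := h.1.symm.trans h'.1
    rfl
  · intro y hy
    obtain ⟨⟨z, z'⟩, rfl⟩ := (Fin.appendEquiv (α := X) p p').surjective y
    refine ⟨⟨∑ i, vec (z i).1, z, z'⟩, ?_, rfl⟩
    simp only [Finset.mem_sigma, Finset.mem_univ, Finset.mem_product, Finset.mem_filter,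
      true_and, Fin.appendEquiv, Equiv.coe_fn_mk, Fin.sum_univ_add, Fin.append_left,
      Fin.append_right] at hy ⊢
    exact add_eq_iff_eq_add.1 hy

open Classical in
lemma cnt_succ (X : Finset (Fin c → A)) (p : ℕ) (u : Vec c A) :
    (Finset.univ.filter fun y : Fin p → X => InX X (u + ∑ i, vec (y i).1)).card =
      cnt X (p + 1) u := by
  symm
  refine Finset.card_bij (fun z _ => Fin.tail z) ?_ ?_ ?_
  · intro z h
    simp only [Finset.mem_filter, Finset.mem_univ, true_and, Fin.sum_univ_succ] at h ⊢
    refine ⟨(z 0).1, (z 0).2, ?_⟩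
    rw [← h, add_assoc]
    simp only [Fin.tail, ZModModule.add_self, add_zero]
  · intro z h z' h' he
    simp only [Finset.mem_filter, Finset.mem_univ, true_and, Fin.sum_univ_succ] at h h'
    rw [← h'] at h
    have e1 : ∀ i : Fin p, z i.succ = z' i.succ := fun i => congrFun he i
    simp only [e1, add_left_inj] at h
    have e0 : z 0 = z' 0 := Subtype.ext (vec_injective h)
    funext i
    exact Fin.cases e0 e1 i
  · intro y hy
    simp only [Finset.mem_filter, Finset.mem_univ, true_and] at hy
    obtain ⟨a, ha, h⟩ := hy
    refine ⟨Fin.cons ⟨a, ha⟩ y, ?_, by simp⟩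
    simp only [Finset.mem_filter, Finset.mem_univ, true_and, Fin.sum_univ_succ, Fin.cons_zero,
      Fin.cons_succ, h]
    rw [add_assoc, ZModModule.add_self, add_zero]

/-- The six-fold zero-sum inequality for the indicator function of `X`. -/
lemma cnt_six_zero (X : Finset (Fin c → A)) : (cnt X 6 0 : ℝ) ≤ 720 ^ c * (X.card : ℝ) ^ 3 := by
  classical
  have h := sum_zero_key_le c (A := A) (fun _ a => if a ∈ X then 1 else 0)
    (fun k a => by split_ifs <;> norm_num)
  have h1 : ∀ k : Fin 6, ∑ a : Fin c → A, (if a ∈ X then (1 : ℝ) else 0) ^ 2 = X.card := by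
    intro k
    simp
  have h2 : ∏ k : Fin 6, √(∑ a : Fin c → A, (if a ∈ X then (1 : ℝ) else 0) ^ 2) =
      (X.card : ℝ) ^ 3 := by
    rw [Finset.prod_congr rfl fun k _ => by rw [h1 k], Finset.prod_const]
    simp only [Finset.card_univ, Fintype.card_fin]
    rw [show 6 = 2 * 3 by norm_num, pow_mul, Real.sq_sqrt (Nat.cast_nonneg _)]
  rw [h2] at h
  refine le_trans ?_ h
  unfold cnt
  rw [Finset.card_eq_sum_ones, Nat.cast_sum, Nat.cast_one]
  have h3 : ∀ x : Fin 6 → Fin c → A, (if ∑ k, vec (x k) = 0 then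
      ∏ k, (if x k ∈ X then (1 : ℝ) else 0) else 0) =
      if (∑ k, vec (x k) = 0 ∧ ∀ k, x k ∈ X) then 1 else 0 := by
    intro x
    rw [Finset.prod_ite_zero]
    simp [← ite_and]
  simp_rw [h3]
  rw [← Finset.sum_filter]
  refine le_of_eq (Finset.sum_bij (fun y _ k => (y k).1) ?_ ?_ ?_ ?_)
  · intro y hy
    simp only [Finset.mem_filter, Finset.mem_univ, true_and] at hy ⊢
    exact ⟨hy, fun k => (y k).2⟩
  · intro y _ y' _ he
    funext k
    exact Subtype.ext (congrFun he k)
  · intro x hx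
    simp only [Finset.mem_filter, Finset.mem_univ, true_and] at hx
    exact ⟨fun k => ⟨x k, hx.2 k⟩, by simpa using hx.1, rfl⟩
  · intro _ _; rfl

/-- The six-fold inequality with two of the six keys frozen to a common value. -/
lemma cnt_four_zero (X : Finset (Fin c → A)) : (cnt X 4 0 : ℝ) ≤ 720 ^ c * (X.card : ℝ) ^ 2 := by
  classical
  rcases isEmpty_or_nonempty X with hX | ⟨⟨a0, ha0⟩⟩
  · have : cnt X 4 0 = 0 := by
      unfold cnt
      rw [Finset.card_eq_zero]
      exact Finset.filter_eq_empty_iff.2 fun y => (hX.false (y 0)).elim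
    rw [this]; push_cast; positivity
  let Y : Fin 6 → Finset (Fin c → A) := ![X, X, X, X, {a0}, {a0}]
  have h := sum_zero_key_le c (A := A) (fun k a => if a ∈ Y k then 1 else 0)
    (fun k a => by split_ifs <;> norm_num)
  have h2 : ∏ k : Fin 6, √(∑ a : Fin c → A, (if a ∈ Y k then (1 : ℝ) else 0) ^ 2) =
      (X.card : ℝ) ^ 2 := by
    have : ∀ k : Fin 6, √(∑ a : Fin c → A, (if a ∈ Y k then (1 : ℝ) else 0) ^ 2) =
      √((Y k).card) := by
      intro k
      simp
    simp only [this, Fin.prod_univ_succ, Y]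
    simp
    have := Real.mul_self_sqrt (Nat.cast_nonneg (α := ℝ) X.card)
    nlinarith
  rw [h2] at h
  refine le_trans ?_ h
  unfold cnt
  rw [Finset.card_eq_sum_ones, Nat.cast_sum, Nat.cast_one]
  have h3 : ∀ x : Fin 6 → Fin c → A, (if ∑ k, vec (x k) = 0 then
      ∏ k, (if x k ∈ Y k then (1 : ℝ) else 0) else 0) =
      if (∑ k, vec (x k) = 0 ∧ ∀ k, x k ∈ Y k) then 1 else 0 := by
    intro x
    rw [Finset.prod_ite_zero]
    simp [← ite_and]
  simp_rw [h3]
  rw [← Finset.sum_filter]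
  refine le_of_eq (Finset.sum_bij (fun y _ => ![(y 0).1, (y 1).1, (y 2).1, (y 3).1, a0, a0])
    ?_ ?_ ?_ ?_)
  · intro y hy
    simp only [Finset.mem_filter, Finset.mem_univ, true_and] at hy ⊢
    refine ⟨?_, fun k => by fin_cases k <;> simp [Y]⟩
    simp only [Fin.sum_univ_succ] at hy ⊢
    simp only [Fin.succ_zero_eq_one] at hy ⊢
    simp [ZModModule.add_self] at hy ⊢
    exact hy
  · intro y _ y' _ he
    funext k
    apply Subtype.ext
    have e0 := congrFun he 0
    have e1 := congrFun he 1
    have e2 := congrFun he 2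
    have e3 := congrFun he 3
    fin_cases k
    · exact e0
    · exact e1
    · exact e2
    · exact e3
  · intro x hx
    simp only [Finset.mem_filter, Finset.mem_univ, true_and] at hx
    have m4 : x 4 = a0 := by simpa [Y] using hx.2 4
    have m5 : x 5 = a0 := by simpa [Y] using hx.2 5
    refine ⟨![⟨x 0, hx.2 0⟩, ⟨x 1, hx.2 1⟩, ⟨x 2, hx.2 2⟩, ⟨x 3, hx.2 3⟩], ?_, ?_⟩
    · have h0 := hx.1
      have e : ∑ k, vec (x k) = vec (x 0) + (vec (x 1) + (vec (x 2) + (vec (x 3) +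
          (vec (x 4) + vec (x 5))))) := by
        simp [Fin.sum_univ_succ]
      rw [e, m4, m5, ZModModule.add_self, add_zero] at h0
      simp [Fin.sum_univ_succ]
      exact h0
    · funext k
      fin_cases k
      · rfl
      · rfl
      · rfl
      · rfl
      · exact m4.symm
      · exact m5.symm
  · intro _ _; rfl

lemma sum_cnt_sq (X : Finset (Fin c → A)) (p : ℕ) :
    ∑ v, cnt X p v ^ 2 = cnt X (p + p) 0 := by
  rw [cnt_add]
  simp [sq]

/-- A six-fold sum is a correlation of the numbers of triples, and Cauchy–Schwarz compares it with
the sum `0`. -/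
lemma cnt_six (X : Finset (Fin c → A)) (u : Vec c A) :
    (cnt X 6 u : ℝ) ≤ 720 ^ c * (X.card : ℝ) ^ 3 := by
  refine le_trans ?_ (cnt_six_zero X)
  rw [show 6 = 3 + 3 by norm_num, ← sum_cnt_sq, cnt_add]
  push_cast
  have h1 : ∑ v, (cnt X 3 (v + u) : ℝ) ^ 2 = ∑ v, (cnt X 3 v : ℝ) ^ 2 :=
    Fintype.sum_equiv (Equiv.addRight u) _ _ fun v => rfl
  have h2 : ∑ v, (cnt X 3 v : ℝ) * cnt X 3 (v + u) ≤
      ∑ v, (((cnt X 3 v : ℝ) ^ 2 + (cnt X 3 (v + u) : ℝ) ^ 2) / 2) := by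
    refine Finset.sum_le_sum fun v _ => ?_
    nlinarith [sq_nonneg ((cnt X 3 v : ℝ) - cnt X 3 (v + u))]
  refine h2.trans (le_of_eq ?_)
  rw [← Finset.sum_div, Finset.sum_add_distrib, h1]
  ring

/-- A number of triples with prescribed sum, bounded by the square root of the number of
zero-sum six-tuples. -/
lemma cnt_three (X : Finset (Fin c → A)) (u : Vec c A) :
    (cnt X 3 u : ℝ) ≤ √(720 ^ c * (X.card : ℝ) ^ 3) := by
  apply Real.le_sqrt_of_sq_le
  refine le_trans ?_ (cnt_six_zero X)
  rw [show 6 = 3 + 3 by norm_num, ← sum_cnt_sq]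
  push_cast
  exact Finset.single_le_sum (f := fun v => (cnt X 3 v : ℝ) ^ 2) (fun v _ => sq_nonneg _)
    (Finset.mem_univ u)

/-- Few vectors are the sum of two keys in many ways. -/
lemma card_heavy_le (X : Finset (Fin c → A)) (R : ℝ) (hR : 0 ≤ R) :
    ((Finset.univ.filter fun v : Vec c A => R < cnt X 2 v).card : ℝ) * R ^ 2 ≤
      720 ^ c * (X.card : ℝ) ^ 2 := by
  refine le_trans ?_ (cnt_four_zero X)
  rw [show 4 = 2 + 2 by norm_num, ← sum_cnt_sq, ← nsmul_eq_mul]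
  push_cast
  refine (Finset.card_nsmul_le_sum _ (fun v => (cnt X 2 v : ℝ) ^ 2) _ ?_).trans
    (Finset.sum_le_univ_sum_of_nonneg fun v => sq_nonneg _)
  intro v hv
  simp only [Finset.mem_filter, Finset.mem_univ, true_and] at hv
  gcongr

/-- Averaging over the slots in the range of `s`: if, for a fixed assignment of the other slots,
at most `B` choices for these slots satisfy `Q`, then `Q` cuts down the number of assignments with
the property `P`, not depending on these slots, accordingly. -/
lemma card_fiber_le {S Y : Type*} [Fintype S] [DecidableEq S] [Fintype Y] {p : ℕ} (s : Fin p → S)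
    (hs : Function.Injective s) (P Q : (S → Y) → Prop) [DecidablePred P] [DecidablePred Q]
    (hP : ∀ x y, P x → P (Function.extend s y x)) (B : ℝ)
    (hB : ∀ x, P x → ((Finset.univ.filter fun y : Fin p → Y => Q (Function.extend s y x)).card : ℝ)
      ≤ B) :
    (Fintype.card Y : ℝ) ^ p * ((Finset.univ.filter fun x => P x ∧ Q x).card : ℝ) ≤
      B * ((Finset.univ.filter P).card : ℝ) := by
  classical
  have inv : ∀ (x : S → Y) (y : Fin p → Y),
      Function.extend s (x ∘ s) (Function.extend s y x) = x := by
    intro x y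
    funext σ
    by_cases h : ∃ i, s i = σ
    · obtain ⟨i, rfl⟩ := h
      rw [hs.extend_apply]; rfl
    · rw [Function.extend_apply' _ _ _ h, Function.extend_apply' _ _ _ h]
  have inv2 : ∀ (x : S → Y) (y : Fin p → Y), Function.extend s y x ∘ s = y := by
    intro x y
    funext i
    simp [hs.extend_apply]
  have h1 : Fintype.card Y ^ p * (Finset.univ.filter fun x => P x ∧ Q x).card =
      ∑ x ∈ Finset.univ.filter P,
        (Finset.univ.filter fun y : Fin p → Y => Q (Function.extend s y x)).card := by
    have : Fintype.card Y ^ p = (Finset.univ : Finset (Fin p → Y)).card := by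
      simp
    rw [this, ← Finset.card_product, ← Finset.card_sigma]
    refine Finset.card_bij (fun z _ => ⟨Function.extend s z.1 z.2, z.2 ∘ s⟩) ?_ ?_ ?_
    · rintro ⟨y, x⟩ h
      simp only [Finset.mem_product, Finset.mem_univ, Finset.mem_filter, true_and,
        Finset.mem_sigma] at h ⊢
      rw [inv]
      exact ⟨hP _ _ h.1, h.2⟩
    · rintro ⟨y, x⟩ _ ⟨y', x'⟩ _ he
      simp only [Sigma.mk.injEq, heq_eq_eq] at he
      have hx : x = x' := by
        rw [← inv x y, ← inv x' y', he.1, he.2]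
      have hy : y = y' := by
        rw [← inv2 x y, ← inv2 x' y', he.1]
      rw [hx, hy]
    · rintro ⟨x, y⟩ h
      simp only [Finset.mem_univ, Finset.mem_filter, true_and,
        Finset.mem_sigma] at h
      refine ⟨(x ∘ s, Function.extend s y x), ?_, ?_⟩
      · simp only [Finset.mem_product, Finset.mem_univ, Finset.mem_filter, true_and]
        exact ⟨hP _ _ h.1, h.2⟩
      · rw [inv, inv2]
  calc (Fintype.card Y : ℝ) ^ p * ((Finset.univ.filter fun x => P x ∧ Q x).card : ℝ)
      = ∑ x ∈ Finset.univ.filter P,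
        ((Finset.univ.filter fun y : Fin p → Y => Q (Function.extend s y x)).card : ℝ) := by
        exact_mod_cast h1
    _ ≤ ∑ x ∈ Finset.univ.filter P, B := by
        refine Finset.sum_le_sum fun x hx => hB x (by simpa using hx)
    _ = _ := by rw [Finset.sum_const, nsmul_eq_mul, mul_comm]

end counting
end TabChoice

/-! ### Assignments of keys to slots with a key among the sums -/

namespace TabChoice

section slots

variable {c : ℕ} {A : Type} [Fintype A] [DecidableEq A] {G : Type} [DecidableEq G]
  {X : Finset (Fin c → A)} {S : Finset G}

/-- The vectors of the keys assigned to the slots of `S`, and `0` on the other slots. -/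
def xh (x : S → X) (σ : G) : Vec c A := if h : σ ∈ S then vec (x ⟨σ, h⟩).1 else 0

omit [Fintype A] in
lemma xh_mem (x : S → X) (σ : S) : xh x σ.1 = vec (x σ).1 := by
  simp [xh]

omit [DecidableEq G] in
/-- An enumeration of a `p`-element set of slots. -/
lemma exists_slots {J : Finset G} (hJ : J ⊆ S) {p : ℕ} (hp : J.card = p) :
    ∃ s : Fin p → S, Function.Injective s ∧ ∀ σ, σ ∈ J ↔ ∃ i, (s i).1 = σ := by
  refine ⟨fun i => ⟨((J.equivFinOfCardEq hp).symm i).1, hJ (Subtype.property _)⟩, ?_, ?_⟩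
  · intro i j h
    simp only [Subtype.mk.injEq] at h
    exact (J.equivFinOfCardEq hp).symm.injective (Subtype.ext h)
  · intro σ
    constructor
    · intro h
      exact ⟨J.equivFinOfCardEq hp ⟨σ, h⟩, by simp⟩
    · rintro ⟨i, rfl⟩
      exact ((J.equivFinOfCardEq hp).symm i).2

omit [Fintype A] in
lemma xh_extend_of_notMem {p : ℕ} (s : Fin p → S) {J : Finset G}
    (hJ : ∀ σ, σ ∈ J ↔ ∃ i, (s i).1 = σ) (x : S → X) (y : Fin p → X) {σ : G} (hσ : σ ∉ J) :
    xh (Function.extend s y x) σ = xh x σ := by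
  unfold xh
  split_ifs with h
  · rw [Function.extend_apply']
    rintro ⟨i, hi⟩
    exact hσ ((hJ σ).2 ⟨i, by rw [hi]⟩)
  · rfl

omit [Fintype A] in
lemma sum_extend_of_disjoint {p : ℕ} (s : Fin p → S) {I J : Finset G}
    (hJ : ∀ σ, σ ∈ J ↔ ∃ i, (s i).1 = σ) (hIJ : Disjoint I J) (x : S → X) (y : Fin p → X) :
    ∑ σ ∈ I, xh (Function.extend s y x) σ = ∑ σ ∈ I, xh x σ :=
  Finset.sum_congr rfl fun _ hσ => xh_extend_of_notMem s hJ x y (Finset.disjoint_left.1 hIJ hσ)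

omit [Fintype A] in
lemma sum_extend {p : ℕ} (s : Fin p → S) (hs : Function.Injective s) {I J : Finset G}
    (hJ : ∀ σ, σ ∈ J ↔ ∃ i, (s i).1 = σ) (hIJ : J ⊆ I) (x : S → X) (y : Fin p → X) :
    ∑ σ ∈ I, xh (Function.extend s y x) σ = ∑ σ ∈ I \ J, xh x σ + ∑ i, vec (y i).1 := by
  rw [← Finset.sum_sdiff hIJ, sum_extend_of_disjoint s hJ Finset.sdiff_disjoint]
  congr 1
  have : J = Finset.univ.image fun i => (s i).1 := by
    ext σ; simp [hJ]
  rw [this, Finset.sum_image (fun i _ j _ h => hs (Subtype.ext h))]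
  refine Finset.sum_congr rfl fun i _ => ?_
  rw [xh_mem, hs.extend_apply]

open Classical in
/-- Replacing the keys in `p` slots of `I`, the sum over `I` is again the vector of a key for as
many choices as there are `p + 1`-tuples with a certain sum. -/
lemma fiber_eq {p : ℕ} (s : Fin p → S) (hs : Function.Injective s) {I J : Finset G}
    (hJ : ∀ σ, σ ∈ J ↔ ∃ i, (s i).1 = σ) (hIJ : J ⊆ I) (x : S → X) :
    (Finset.univ.filter fun y : Fin p → X =>
      InX X (∑ σ ∈ I, xh (Function.extend s y x) σ)).card =
      cnt X (p + 1) (∑ σ ∈ I \ J, xh x σ) := by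
  rw [← cnt_succ]
  congr 1
  ext y
  simp [sum_extend s hs hJ hIJ]

variable (X S)

omit [Fintype A] [DecidableEq A] in
lemma card_slots : ((Finset.univ : Finset (S → X)).card : ℝ) = (X.card : ℝ) ^ S.card := by
  rw [Finset.card_univ, Fintype.card_fun, Fintype.card_coe, Fintype.card_coe]
  push_cast
  rfl

variable {S}

open Classical in
/-- Assignments for which the sum over at least five slots is again a key: five of these slots are
refilled, and the six-fold bound counts the admissible choices. -/
lemma count_five {I : Finset G} (hI : I ⊆ S) (h5 : 5 ≤ I.card) :
    (X.card : ℝ) ^ 5 * ((Finset.univ.filter fun x : S → X => InX X (∑ σ ∈ I, xh x σ)).card : ℝ) ≤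
      720 ^ c * (X.card : ℝ) ^ 3 * (X.card : ℝ) ^ S.card := by
  obtain ⟨J, hJI, hJ⟩ := Finset.exists_subset_card_eq h5
  obtain ⟨s, hs, hsJ⟩ := exists_slots (hJI.trans hI) hJ
  have h := card_fiber_le (S := S) (Y := X) s hs (fun _ => True)
    (fun x => InX X (∑ σ ∈ I, xh x σ)) (fun _ _ h => h) (720 ^ c * (X.card : ℝ) ^ 3) (by
      intro x _
      rw [fiber_eq s hs hsJ hJI]
      exact cnt_six X _)
  simp only [true_and, Fintype.card_coe, Finset.filter_true, card_slots X S] at h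
  exact h

open Classical in
/-- Assignments for which the sum over three slots is again a key: zero-sum quadruples of keys. -/
lemma count_three {I : Finset G} (hI : I ⊆ S) (h3 : I.card = 3) :
    (X.card : ℝ) ^ 3 * ((Finset.univ.filter fun x : S → X => InX X (∑ σ ∈ I, xh x σ)).card : ℝ) ≤
      720 ^ c * (X.card : ℝ) ^ 2 * (X.card : ℝ) ^ S.card := by
  obtain ⟨s, hs, hsJ⟩ := exists_slots hI h3
  have h := card_fiber_le (S := S) (Y := X) s hs (fun _ => True)
    (fun x => InX X (∑ σ ∈ I, xh x σ)) (fun _ _ h => h) (720 ^ c * (X.card : ℝ) ^ 2) (by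
      intro x _
      rw [fiber_eq s hs hsJ subset_rfl, Finset.sdiff_self, Finset.sum_empty]
      exact cnt_four_zero X)
  simp only [true_and, Fintype.card_coe, Finset.filter_true, card_slots X S] at h
  exact h

open Classical in
/-- Assignments for which two sums of three are keys, when the second involves at least two new
slots: refilling these costs the number of triples with a prescribed sum. -/
lemma count_three_three {I I' : Finset G} (hI : I ⊆ S) (h3 : I.card = 3) (hI' : I' ⊆ S)
    (h2 : 2 ≤ (I' \ I).card) :
    (X.card : ℝ) ^ 5 * ((Finset.univ.filter fun x : S → X => InX X (∑ σ ∈ I, xh x σ) ∧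
      InX X (∑ σ ∈ I', xh x σ)).card : ℝ) ≤
      √(720 ^ c * (X.card : ℝ) ^ 3) * (720 ^ c * (X.card : ℝ) ^ 2 * (X.card : ℝ) ^ S.card) := by
  obtain ⟨J, hJI, hJ⟩ := Finset.exists_subset_card_eq h2
  obtain ⟨s, hs, hsJ⟩ := exists_slots (hJI.trans (Finset.sdiff_subset.trans hI')) hJ
  have hd : Disjoint I J := Finset.disjoint_of_subset_right hJI Finset.disjoint_sdiff
  have h := card_fiber_le (S := S) (Y := X) s hs (fun x => InX X (∑ σ ∈ I, xh x σ))
    (fun x => InX X (∑ σ ∈ I', xh x σ))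
    (fun x y h => by rwa [sum_extend_of_disjoint s hsJ hd]) √(720 ^ c * (X.card : ℝ) ^ 3) (by
      intro x _
      rw [fiber_eq s hs hsJ (hJI.trans Finset.sdiff_subset)]
      exact cnt_three X _)
  rw [Fintype.card_coe] at h
  calc _ = (X.card : ℝ) ^ 3 * ((X.card : ℝ) ^ 2 * ((Finset.univ.filter fun x : S → X =>
          InX X (∑ σ ∈ I, xh x σ) ∧ InX X (∑ σ ∈ I', xh x σ)).card : ℝ)) := by ring
    _ ≤ (X.card : ℝ) ^ 3 * (√(720 ^ c * (X.card : ℝ) ^ 3) *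
          ((Finset.univ.filter fun x : S → X => InX X (∑ σ ∈ I, xh x σ)).card : ℝ)) := by
        gcongr
    _ = √(720 ^ c * (X.card : ℝ) ^ 3) * ((X.card : ℝ) ^ 3 *
          ((Finset.univ.filter fun x : S → X => InX X (∑ σ ∈ I, xh x σ)).card : ℝ)) := by ring
    _ ≤ _ := mul_le_mul_of_nonneg_left (count_three X hI h3) (Real.sqrt_nonneg _)

open Classical in
/-- Assignments for which two sums of three that share the pair `B` are keys, when the sum over `B`
is attained by at most `R` pairs: given the rest, there are at most `R` choices for the key of the
remaining slot `a`. -/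
lemma count_light {B : Finset G} {u a : G} (hB : B.card = 2) (hu : u ∉ B) (ha : a ∉ insert u B)
    (hS : insert u B ⊆ S) (haS : a ∈ S) (R : ℝ) (hR : 0 ≤ R) :
    (X.card : ℝ) ^ 4 * ((Finset.univ.filter fun x : S → X =>
      InX X (∑ σ ∈ insert u B, xh x σ) ∧
      ((cnt X 2 (∑ σ ∈ B, xh x σ) : ℝ) ≤ R ∧ InX X (∑ σ ∈ insert a B, xh x σ))).card : ℝ) ≤
      R * (720 ^ c * (X.card : ℝ) ^ 2 * (X.card : ℝ) ^ S.card) := by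
  obtain ⟨s, hs, hsJ⟩ := exists_slots (J := {a}) (S := S) (by simpa using haS)
    (Finset.card_singleton a)
  have haB : a ∉ B := fun h => ha (Finset.mem_insert_of_mem h)
  have hd : Disjoint (insert u B) {a} := by simpa using ha
  have hd' : Disjoint B {a} := by simpa using haB
  have h := card_fiber_le (S := S) (Y := X) s hs (fun x => InX X (∑ σ ∈ insert u B, xh x σ))
    (fun x => (cnt X 2 (∑ σ ∈ B, xh x σ) : ℝ) ≤ R ∧ InX X (∑ σ ∈ insert a B, xh x σ))
    (fun x y h => by rwa [sum_extend_of_disjoint s hsJ hd]) R (by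
      intro x _
      simp_rw [sum_extend_of_disjoint s hsJ hd']
      by_cases hl : (cnt X 2 (∑ σ ∈ B, xh x σ) : ℝ) ≤ R
      · simp only [hl, true_and]
        rw [fiber_eq s hs hsJ (by simp)]
        have : insert a B \ {a} = B := by
          rw [Finset.insert_sdiff_of_mem _ (by simp), Finset.sdiff_singleton_eq_erase,
            Finset.erase_eq_of_notMem haB]
        rwa [this]
      · simp [hl, hR])
  rw [Fintype.card_coe, pow_one] at h
  refine le_trans (le_of_eq (by ring)) ((mul_le_mul_of_nonneg_left h
    (pow_nonneg (Nat.cast_nonneg X.card) 3)).trans ?_)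
  rw [← mul_assoc, mul_comm _ R, mul_assoc]
  exact mul_le_mul_of_nonneg_left
    (count_three X hS (by rw [Finset.card_insert_of_notMem hu, hB])) hR

end slots
end TabChoice

/-! ### Trees of collisions and bad codes -/

namespace TabChoice

/-- A rooted tree whose vertices stand for keys.  The edge from a vertex `l ≠ root` to its parent
asserts that the two keys collide under the hash function number `grp l`; `grp root` is only a
label. -/
structure Tree (d : ℕ) (Ω : Type) where
  root : Ω
  par : Ω → Ω
  grp : Ω → Fin d
  rk : Ω → ℕ
  rk_lt : ∀ l, l ≠ root → rk (par l) < rk l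

section linalg

variable {d c b : ℕ} {A : Type} [Fintype A] [DecidableEq A] {G : Type} [DecidableEq G]

/-- The combination of position characters that is hashed to zero if and only if the keys with
vectors `z σ` and `z (par σ)` collide under the hash function of the edge at `σ`. -/
def edge (t : Tree d G) (z : G → Vec c A) (σ : G) : Fin d → Vec c A :=
  Pi.single (t.grp σ) (z σ + z (t.par σ))

/-- The combination `single J (Σ_{σ ∈ I} z σ + z P)`. -/
def comb (z : G → Vec c A) (J : Fin d) (I : Finset G) (P : G) : Fin d → Vec c A :=
  Pi.single J (∑ σ ∈ I, z σ + z P)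

/-- A set of slots that contains the parents of all of its members other than the root. -/
def ParClosed (t : Tree d G) (S : Finset G) : Prop :=
  t.root ∈ S ∧ ∀ σ ∈ S, σ ≠ t.root → t.par σ ∈ S

omit [Fintype A] [DecidableEq A] [DecidableEq G] in
/-- Prescribing values on the keys of the independent slots, for a single hash function. -/
lemma exists_functional {S : Finset G} {z : G → Vec c A} (hz : LinearIndepOn (ZMod 2) z S)
    (J : Fin d) (f : G → ZMod 2) :
    ∃ L : (Fin d → Vec c A) →ₗ[ZMod 2] ZMod 2, ∀ σ ∈ S, ∀ j,
      L (Pi.single j (z σ)) = if j = J then f σ else 0 := by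
  have hz' : LinearIndependent (ZMod 2) (fun σ : (S : Set G) => z σ) := hz
  obtain ⟨θ, hθ⟩ := LinearMap.exists_extend
    (((Finsupp.lift (ZMod 2) (ZMod 2) (S : Set G)) fun σ => f σ).comp
      hz'.linearCombinationEquiv.symm.toLinearMap)
  refine ⟨θ.comp (LinearMap.proj J), fun σ hσ j => ?_⟩
  rw [LinearMap.comp_apply, LinearMap.proj_apply]
  split_ifs with h
  · subst h
    rw [Pi.single_eq_same]
    have h1 := LinearMap.congr_fun hθ
      ⟨z σ, Submodule.subset_span ⟨(⟨σ, hσ⟩ : (S : Set G)), rfl⟩⟩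
    simp only [LinearMap.comp_apply, Submodule.subtype_apply] at h1
    rw [h1]
    have h2 : hz'.linearCombinationEquiv.symm
        ⟨z σ, Submodule.subset_span ⟨(⟨σ, hσ⟩ : (S : Set G)), rfl⟩⟩
        = Finsupp.single (⟨σ, hσ⟩ : (S : Set G)) 1 := by
      rw [LinearEquiv.symm_apply_eq]
      apply Subtype.ext
      simp
    simp [h2]
  · rw [Pi.single_eq_of_ne' h, map_zero]

omit [Fintype A] [DecidableEq A] in
/-- The edges of a tree on independent keys are independent: an edge of maximal rank in a
dependency is detected by the functional that singles out its lower end. -/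
lemma edges_indep (t : Tree d G) {S : Finset G} (hS : ParClosed t S) {z : G → Vec c A}
    (hz : LinearIndepOn (ZMod 2) z S) :
    LinearIndependent (ZMod 2) (fun σ : {σ // σ ∈ S.erase t.root} => edge t z σ.1) := by
  have : LinearIndepOn (ZMod 2) (edge t z) ((S.erase t.root : Finset G) : Set G) := by
    rw [linearIndepOn_finset_iff]
    intro f hf
    by_contra hne
    push Not at hne
    obtain ⟨τ, hτ, hfτ⟩ := hne
    obtain ⟨σ, hσ, hmax⟩ := Finset.exists_max_image ((S.erase t.root).filter fun τ => f τ ≠ 0) t.rk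
      ⟨τ, by simp [hfτ, Finset.mem_erase.1 hτ]⟩
    rw [Finset.mem_filter] at hσ
    obtain ⟨hσ1, hσ2⟩ := Finset.mem_erase.1 hσ.1
    obtain ⟨L, hL⟩ := exists_functional hz (t.grp σ) (fun τ => if τ = σ then 1 else 0)
    have h1 := congrArg L hf
    rw [map_sum, map_zero, Finset.sum_eq_single σ] at h1
    · rw [map_smul, edge, Pi.single_add, map_add, hL σ hσ2, hL _ (hS.2 σ hσ2 hσ1)] at h1
      have hne : t.par σ ≠ σ := fun h => absurd (t.rk_lt σ hσ1) (by rw [h]; exact lt_irrefl _)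
      simp [hne] at h1
      exact hσ.2 h1
    · intro τ hτ hτσ
      by_cases hfτ : f τ = 0
      · rw [hfτ, zero_smul, map_zero]
      obtain ⟨hτ1, hτ2⟩ := Finset.mem_erase.1 hτ
      rw [map_smul, edge, Pi.single_add, map_add, hL τ hτ2, hL _ (hS.2 τ hτ2 hτ1)]
      have hne : t.par τ ≠ σ := by
        intro h
        have h1 := t.rk_lt τ hτ1
        rw [h] at h1
        exact absurd (hmax τ (by simp [hfτ, hτ1, hτ2])) (not_le.2 h1)
      simp [hne, hτσ]
    · intro h; exact absurd hσ.1 h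
  exact this

/-- The edges of the tree on `S`. -/
def edges (t : Tree d G) (S : Finset G) (z : G → Vec c A) :
    {σ // σ ∈ S.erase t.root} → Fin d → Vec c A := fun σ => edge t z σ.1

omit [Fintype A] [DecidableEq A] in
lemma notMem_span_of_functional {ι : Type*} {w : ι → Fin d → Vec c A} {v : Fin d → Vec c A}
    (L : (Fin d → Vec c A) →ₗ[ZMod 2] ZMod 2) (hw : ∀ e, L (w e) = 0) (hv : L v ≠ 0) :
    v ∉ Submodule.span (ZMod 2) (Set.range w) := by
  intro h
  have h1 : Submodule.span (ZMod 2) (Set.range w) ≤ LinearMap.ker L := by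
    rw [Submodule.span_le]
    rintro _ ⟨e, rfl⟩
    exact hw e
  exact hv (h1 h)

end linalg

section events

variable {d c b : ℕ} {A : Type} [Fintype A] [DecidableEq A] {G : Type} [DecidableEq G]
  (X : Finset (Fin c → A)) (t : Tree d G) (S : Finset G)

/-- Some assignment of keys of `X` to the slots of `S` has the property `Q`, has independent tree
edges, and satisfies all the collisions of the tree. -/
def Ev1 (Q : (S → X) → Prop) (T : Tabs d c b A) : Prop :=
  ∃ x : S → X, Q x ∧ LinearIndependent (ZMod 2) (edges t S (xh x)) ∧
    ∀ e, ev T (edges t S (xh x) e) = 0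

/-- As `Ev1`, with one further independent combination hashed to zero. -/
def Ev2 (Q : (S → X) → Prop) (J : Fin d) (I : Finset G) (P : G) (T : Tabs d c b A) : Prop :=
  ∃ x : S → X, Q x ∧
    LinearIndependent (ZMod 2) (fun o : Option _ => o.elim (comb (xh x) J I P) (edges t S (xh x))) ∧
    ∀ e : Option _, ev T (e.elim (comb (xh x) J I P) (edges t S (xh x))) = 0

/-- As `Ev1`, with two further independent combinations hashed to zero. -/
def Ev3 (J : Fin d) (I : Finset G) (P : G) (J' : Fin d) (I' : Finset G) (P' : G)
    (T : Tabs d c b A) : Prop :=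
  ∃ x : S → X, True ∧
    LinearIndependent (ZMod 2) (fun o : Option (Option _) => o.elim (comb (xh x) J' I' P')
      fun o => o.elim (comb (xh x) J I P) (edges t S (xh x))) ∧
    ∀ e : Option (Option _), ev T (e.elim (comb (xh x) J' I' P')
      fun o => o.elim (comb (xh x) J I P) (edges t S (xh x))) = 0

/-- A collision with a difference that is attained by many pairs of keys. -/
def Heavy (R : ℝ) (T : Tabs d c b A) : Prop :=
  ∃ J : Fin d, ∃ v : Vec c A, v ≠ 0 ∧ R < cnt X 2 v ∧ ev T (Pi.single J v) = 0

/-- The ways in which the keys of several trees can be dependent, each with the data describing it.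
Here `S` is a set of slots with independent keys, and a key outside `S` is a sum over `S`. The
alternatives are: a sum of at least five keys that is a key; a sum of three that is a key, and one
further independent collision; two further independent collisions; two sums of three that are keys,
where the second involves at least two new keys; and two sums of three with a common pair `I` and
third terms `P` and `P'`, where the sum over `I` is attained by at most `R` pairs of keys. -/
def BadCode (R : ℝ) (I I' : Finset G) (J J' : Fin d) (P P' : G) (T : Tabs d c b A) : Prop :=
  t.root ∈ S ∧
  ((I ⊆ S ∧ 5 ≤ I.card ∧ Ev1 X t S (fun x => InX X (∑ σ ∈ I, xh x σ)) T) ∨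
    (I ⊆ S ∧ I.card = 3 ∧ Ev2 X t S (fun x => InX X (∑ σ ∈ I, xh x σ)) J' I' P' T) ∨
    Ev3 X t S J I P J' I' P' T ∨
    (I ⊆ S ∧ I.card = 3 ∧ I' ⊆ S ∧ 2 ≤ (I' \ I).card ∧
      Ev1 X t S (fun x => InX X (∑ σ ∈ I, xh x σ) ∧ InX X (∑ σ ∈ I', xh x σ)) T) ∨
    (I.card = 2 ∧ P ∉ I ∧ P' ∉ insert P I ∧ insert P I ⊆ S ∧ P' ∈ S ∧
      Ev1 X t S (fun x => InX X (∑ σ ∈ insert P I, xh x σ) ∧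
        ((cnt X 2 (∑ σ ∈ I, xh x σ) : ℝ) ≤ R ∧ InX X (∑ σ ∈ insert P' I, xh x σ))) T))

end events

section dichotomy

/-- Five disjoint copies of a tree, with the roots joined to the root of the first copy. -/
def Tree.forest {d : ℕ} {Ω : Type} [DecidableEq Ω] (t : Tree d Ω) : Tree d (Fin 5 × Ω) where
  root := (0, t.root)
  par p := if p.2 = t.root then (0, t.root) else (p.1, t.par p.2)
  grp p := t.grp p.2
  rk p := if p = (0, t.root) then 0 else t.rk p.2 + 1
  rk_lt := by
    rintro ⟨i, l⟩ h
    simp only [if_neg h]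
    split_ifs with h1 h2
    · simp
    · exact absurd rfl h2
    · omega
    · have := t.rk_lt l h1
      simp only
      omega

end dichotomy

end TabChoice

/-! ### Five trees are independent in one copy or described by a bad code -/

namespace TabChoice

section dichotomy

variable {d c b : ℕ} {A : Type} [Fintype A] [DecidableEq A]

/-- A linear functional that is `1` on every key, so that only sums of an odd number of keys can be
keys. -/
lemma exists_parity (hc : 1 ≤ c) :
    ∃ θ : Vec c A →ₗ[ZMod 2] ZMod 2, ∀ x : Fin c → A, θ (vec x) = 1 := by
  refine ⟨{ toFun := fun v => ∑ a, v ⟨0, hc⟩ a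
            map_add' := fun v w => by simp [Finset.sum_add_distrib]
            map_smul' := fun r v => by simp [Finset.mul_sum] }, fun x => ?_⟩
  simp [vec]

lemma zmod_two_ne_zero {a : ZMod 2} (h : a ≠ 0) : a = 1 := by
  revert a; decide

lemma odd_card {I : Type*} {s : Finset I} (h : ∑ _i ∈ s, (1 : ZMod 2) = 1) : Odd s.card := by
  rw [Finset.sum_const, nsmul_eq_mul, mul_one] at h
  exact (ZMod.natCast_eq_one_iff_odd).1 h

omit [Fintype A] [DecidableEq A] in
/-- Over `F₂`, membership in a span means being a subset sum. -/
lemma exists_index_set {G : Type} [DecidableEq G] {S : Finset G} {z : G → Vec c A} {v : Vec c A}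
    (h : v ∈ Submodule.span (ZMod 2) (z '' S)) : ∃ I ⊆ S, ∑ σ ∈ I, z σ = v := by
  obtain ⟨f, hf⟩ := (Submodule.mem_span_image_finset_iff_exists_fun (ZMod 2)).1 h
  refine ⟨(Finset.univ.filter fun σ : S => f σ ≠ 0).image Subtype.val, ?_, ?_⟩
  · intro σ hσ
    obtain ⟨τ, _, rfl⟩ := Finset.mem_image.1 hσ
    exact τ.2
  · rw [Finset.sum_image (fun _ _ _ _ h => Subtype.ext h), ← hf, Finset.sum_filter]
    refine Finset.sum_congr rfl fun σ _ => ?_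
    split_ifs with h
    · rw [zmod_two_ne_zero h, one_smul]
    · rw [not_not.1 h, zero_smul]

/-- If five copies of a tree are laid out on keys with independent roots, so that all collisions of
the tree take place and siblings in the same bin are distinct, then the keys of one copy are
independent, or the dependencies can be described by a bad code, or some heavy difference
collides. -/
theorem dichotomy {Ω : Type} [Fintype Ω] [DecidableEq Ω] (hc : 1 ≤ c) (t : Tree d Ω)
    (hg : ∀ l, l ≠ t.root → t.grp (t.par l) ≠ t.grp l) (X : Finset (Fin c → A))
    (T : Tabs d c b A) (κ : Fin 5 × Ω → X)
    (ha : ∀ i l, l ≠ t.root → simpleTab (T (t.grp l)) (κ (i, l)).1 =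
      simpleTab (T (t.grp l)) (κ (i, t.par l)).1)
    (hroot : ∀ i, simpleTab (T (t.grp t.root)) (κ (i, t.root)).1 =
      simpleTab (T (t.grp t.root)) (κ (0, t.root)).1)
    (hind : LinearIndependent (ZMod 2) fun i => vec (κ (i, t.root)).1)
    (hb : ∀ i l l', l ≠ t.root → (l' = t.par l ∨ (l' ≠ t.root ∧ t.par l' = t.par l ∧
      t.grp l' = t.grp l ∧ l' ≠ l)) → κ (i, l') ≠ κ (i, l))
    (R : ℝ) :
    (∃ i, LinearIndependent (ZMod 2) fun l => vec (κ (i, l)).1) ∨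
    (∃ S I I' J J' P P', BadCode X t.forest S R I I' J J' P P' T) ∨ Heavy X R T := by
  classical
  set z : Fin 5 × Ω → Vec c A := fun σ => vec (κ σ).1 with hz
  -- a maximal parent-closed independent set of slots that contains all roots
  let good : Finset (Fin 5 × Ω) → Prop := fun S =>
    (∀ i, (i, t.root) ∈ S) ∧ ParClosed t.forest S ∧ LinearIndepOn (ZMod 2) z (S : Set (Fin 5 × Ω))
  have hgood : ∃ S, good S := by
    refine ⟨Finset.univ.image fun i => (i, t.root), fun i => by simp, ⟨?_, ?_⟩, ?_⟩
    · simp [Tree.forest]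
    · intro σ hσ _
      obtain ⟨i, _, rfl⟩ := Finset.mem_image.1 hσ
      simp [Tree.forest]
    · rw [Finset.coe_image, Finset.coe_univ, Set.image_univ]
      exact (linearIndepOn_range_iff (fun i j h => (Prod.mk.inj h).1) z).2 hind
  obtain ⟨S, hS, hmax⟩ := Finset.exists_max_image (Finset.univ.filter good) Finset.card
    (by obtain ⟨S, hS⟩ := hgood; exact ⟨S, by simpa using hS⟩)
  simp only [Finset.mem_filter, Finset.mem_univ, true_and] at hS hmax
  obtain ⟨hSr, hSc, hSi⟩ := hS
  by_cases hclean : ∃ i, ∀ l, (i, l) ∈ S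
  · left
    obtain ⟨i, hi⟩ := hclean
    refine ⟨i, ?_⟩
    have h1 : LinearIndependent (ZMod 2) fun σ : (S : Set (Fin 5 × Ω)) => z σ := hSi
    exact h1.comp (fun l => (⟨(i, l), hi l⟩ : (S : Set (Fin 5 × Ω))))
      (fun l l' h => (Prod.mk.inj (Subtype.mk.inj h)).2)
  right
  push Not at hclean
  -- in every copy, the first slot that is missing from `S`
  have hfirst : ∀ i, ∃ l, (i, l) ∉ S ∧ l ≠ t.root ∧ (i, t.par l) ∈ S := by
    intro i
    obtain ⟨l0, hl0⟩ := hclean i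
    obtain ⟨l, hl, hmin⟩ := Finset.exists_min_image (Finset.univ.filter fun l => (i, l) ∉ S) t.rk
      ⟨l0, by simpa using hl0⟩
    simp only [Finset.mem_filter, Finset.mem_univ, true_and] at hl hmin
    have hne : l ≠ t.root := by rintro rfl; exact hl (hSr i)
    refine ⟨l, hl, hne, ?_⟩
    by_contra h
    exact absurd (t.rk_lt l hne) (not_lt.2 (hmin _ h))
  choose l hlS hlr hpS using hfirst
  have hspan : ∀ i, ∃ I ⊆ S, ∑ σ ∈ I, z σ = z (i, l i) := by
    intro i
    apply exists_index_set
    by_contra h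
    have h1 : good (insert (i, l i) S) := by
      refine ⟨fun j => Finset.mem_insert_of_mem (hSr j), ⟨Finset.mem_insert_of_mem hSc.1, ?_⟩, ?_⟩
      · intro σ hσ hσr
        rcases Finset.mem_insert.1 hσ with rfl | hσ
        · simp only [Tree.forest, if_neg (hlr i)]
          exact Finset.mem_insert_of_mem (hpS i)
        · exact Finset.mem_insert_of_mem (hSc.2 σ hσ hσr)
      · rw [Finset.coe_insert]
        exact hSi.insert h
    have h2 := hmax _ h1
    rw [Finset.card_insert_of_notMem (hlS i)] at h2
    omega
  choose I hIS hIz using hspan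
  have hodd : ∀ i, Odd (I i).card := by
    intro i
    obtain ⟨θ, hθ⟩ := exists_parity (A := A) hc
    apply odd_card
    have h := congrArg θ (hIz i)
    rw [map_sum] at h
    simpa [hz, hθ] using h
  -- the actual assignment of keys and its vectors
  let x : S → X := fun σ => κ σ.1
  have hx : ∀ σ ∈ S, xh x σ = z σ := fun σ hσ => xh_mem x ⟨σ, hσ⟩
  have hxs : ∀ I' ⊆ S, ∑ σ ∈ I', xh x σ = ∑ σ ∈ I', z σ := fun I' hI' =>
    Finset.sum_congr rfl fun σ hσ => hx σ (hI' hσ)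
  have hin : ∀ i, InX X (∑ σ ∈ I i, xh x σ) := fun i => by
    rw [hxs _ (hIS i), hIz i]
    exact ⟨_, (κ (i, l i)).2, rfl⟩
  have hxi : LinearIndepOn (ZMod 2) (xh x) (S : Set (Fin 5 × Ω)) :=
    LinearIndepOn.congr hSi fun σ hσ => (hx σ hσ).symm
  set W := edges t.forest S (xh x) with hW
  have hWi : LinearIndependent (ZMod 2) W := edges_indep t.forest hSc hxi
  have hevz : ∀ (J : Fin d) (σ : Fin 5 × Ω), ev T (Pi.single J (z σ)) =
      simpleTab (T J) (κ σ).1 := fun J σ => ev_single_vec T J _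
  have hWk : ∀ e, ev T (W e) = 0 := by
    rintro ⟨⟨i, m⟩, hσ⟩
    obtain ⟨hσr, hσS⟩ := Finset.mem_erase.1 hσ
    simp only [hW, edges, edge]
    rw [hx _ hσS, hx _ (hSc.2 _ hσS hσr), Pi.single_add, map_add, hevz, hevz]
    have : simpleTab (T (t.forest.grp (i, m))) (κ (i, m)).1 =
        simpleTab (T (t.forest.grp (i, m))) (κ (t.forest.par (i, m))).1 := by
      simp only [Tree.forest]
      split_ifs with h
      · rw [h]; exact hroot i
      · exact ha i m h
    rw [this, ZModModule.add_self]
  -- `D i` is the collision of the missing key `l i` with its parent, where the missing key is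
  -- replaced by the sum of keys in `S` that it equals
  set J : Fin 5 → Fin d := fun i => t.grp (l i) with hJ
  set P : Fin 5 → Fin 5 × Ω := fun i => (i, t.par (l i)) with hP
  set D : Fin 5 → Fin d → Vec c A := fun i => comb (xh x) (J i) (I i) (P i) with hD
  have hDk : ∀ i, ev T (D i) = 0 := by
    intro i
    simp only [hD, comb]
    rw [hxs _ (hIS i), hIz, hx _ (hpS i), Pi.single_add, map_add, hevz, hevz, ha i _ (hlr i),
      ZModModule.add_self]
  -- the keys that must collide with the missing key if the collision is forced by the tree
  let cls : Fin 5 → Fin 5 × Ω → Prop := fun i σ => σ = P i ∨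
    (σ.1 = i ∧ σ.2 ≠ t.root ∧ t.par σ.2 = t.par (l i) ∧ t.grp σ.2 = J i)
  have hclsfst : ∀ i σ, cls i σ → σ.1 = i := by
    rintro i σ (rfl | h)
    · rfl
    · exact h.1
  have hcls_ev : ∀ i σ, cls i σ → simpleTab (T (J i)) (κ σ).1 =
      simpleTab (T (J i)) (κ (P i)).1 := by
    rintro i ⟨i', m⟩ (h | ⟨h1, h2, h3, h4⟩)
    · rw [h]
    · simp only at h1 h2 h3 h4
      subst h1
      rw [← h4, ha _ m h2, h3]
  have hcls_ne : ∀ i σ, cls i σ → σ ∈ S → κ σ ≠ κ (i, l i) := by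
    rintro i ⟨i', m⟩ (h | ⟨h1, h2, h3, h4⟩) hσ
    · rw [h]; exact hb i _ _ (hlr i) (Or.inl rfl)
    · simp only at h1 h2 h3 h4
      subst h1
      refine hb _ _ _ (hlr _) (Or.inr ⟨h2, h3, h4, ?_⟩)
      rintro rfl
      exact hlS _ hσ
  -- The functional `L i` adds up the coefficients of the class `cls i` under hash function `J i`.
  -- An edge of the tree in group `J i` has both ends in the class or none, because consecutive
  -- edges differ in their group; hence `L i` vanishes on the tree.
  have hL : ∀ i, ∃ L : (Fin d → Vec c A) →ₗ[ZMod 2] ZMod 2, ∀ σ ∈ S, ∀ j,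
      L (Pi.single j (xh x σ)) = if j = J i then (if cls i σ then 1 else 0) else 0 := fun i =>
    exists_functional hxi (J i) (fun σ => if cls i σ then 1 else 0)
  choose L hL using hL
  have hLW : ∀ i e, L i (W e) = 0 := by
    rintro i ⟨⟨i', m⟩, hσ⟩
    obtain ⟨hσr, hσS⟩ := Finset.mem_erase.1 hσ
    simp only [hW, edges, edge]
    rw [Pi.single_add, map_add, hL i _ hσS, hL i _ (hSc.2 _ hσS hσr)]
    split_ifs with h1 h2 h3 h3 <;> try rfl
    · exfalso
      apply h3
      have hgr : t.grp m = t.grp (l i) := h1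
      rcases h2 with h2 | ⟨h4, h5, h6, h7⟩
      · -- the parent of the missing slot lies in another group
        simp only [hP, Prod.mk.injEq] at h2
        exact absurd (h2.2 ▸ hgr) (hg _ (hlr i))
      · simp only at h4 h5 h6
        left
        simp [Tree.forest, h5, h6, hP, h4]
    · exfalso
      apply h2
      have hgr : t.grp m = t.grp (l i) := h1
      by_cases hm : m = t.root
      · subst hm
        simp only [Tree.forest, if_true] at h3
        rcases h3 with h3 | ⟨_, h5, _⟩
        · simp only [hP, Prod.mk.injEq] at h3
          exact absurd (h3.2 ▸ hgr) (hg _ (hlr i))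
        · exact absurd rfl h5
      · simp only [Tree.forest, if_neg hm] at h3
        rcases h3 with h3 | ⟨_, h5, _, h7⟩
        · simp only [hP, Prod.mk.injEq] at h3
          right
          exact ⟨h3.1, hm, h3.2, h1⟩
        · exact absurd (h7.trans h1.symm) (hg m hm)
  have hLD : ∀ i j, L i (D j) = if J j = J i then
      (∑ σ ∈ I j, (if cls i σ then 1 else 0)) + (if cls i (P j) then 1 else 0) else 0 := by
    intro i j
    have : D j = ∑ σ ∈ I j, Pi.single (J j) (xh x σ) + Pi.single (J j) (xh x (P j)) := by
      simp only [hD, comb]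
      rw [Pi.single_add]
      congr 1
      exact map_sum (AddMonoidHom.single (fun _ : Fin d => Vec c A) (J j)) _ _
    rw [this, map_add, map_sum, Finset.sum_congr rfl fun σ hσ => hL i σ (hIS j hσ) _,
      hL i _ (hpS j)]
    split_ifs <;> simp
  have hclsP : ∀ i, cls i (P i) := fun i => Or.inl rfl
  -- a collision that follows from the tree must involve a second member of the class
  have hspanD : ∀ i, D i ∈ Submodule.span (ZMod 2) (Set.range W) → ∃ a ∈ I i, cls i a := by
    intro i hi
    by_contra hne
    push Not at hne
    refine notMem_span_of_functional (L i) (hLW i) ?_ hi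
    rw [hLD, if_pos rfl, Finset.sum_eq_zero fun σ hσ => if_neg (hne σ hσ), if_pos (hclsP i)]
    simp
  -- a missing key is different from the keys of its class
  have hone : ∀ i, (I i).card = 1 → ∀ a ∈ I i, ¬ cls i a := by
    intro i hi a ha hcl
    obtain ⟨a', ha'⟩ := Finset.card_eq_one.1 hi
    have h1 := hIz i
    rw [ha'] at h1 ha
    obtain rfl := Finset.mem_singleton.1 ha
    rw [Finset.sum_singleton] at h1
    exact hcls_ne i a hcl (hIS i (by rw [ha']; exact Finset.mem_singleton_self a))
      (Subtype.ext (vec_injective h1))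
  -- the index sets have odd size; a size of at least five is one of the bad alternatives
  by_cases h5 : ∃ i, 5 ≤ (I i).card
  · obtain ⟨i, hi⟩ := h5
    left
    exact ⟨S, I i, ∅, J 0, J 0, P 0, P 0, hSc.1, Or.inl ⟨hIS i, hi, x, hin i, hWi, hWk⟩⟩
  push Not at h5
  have h13 : ∀ i, (I i).card = 1 ∨ (I i).card = 3 := by
    intro i
    have h1 := h5 i
    obtain ⟨k, hk⟩ := hodd i
    omega
  by_cases h3 : ∃ i, (I i).card = 3
  swap
  · -- All missing keys are copies of keys in `S`, so no `D i` follows from the tree; `D 0` and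
    -- `D i` are independent if the slot `a` whose key is repeated in copy `0` is not in copy `i`.
    push Not at h3
    have h1 : ∀ i, (I i).card = 1 := fun i => (h13 i).resolve_right (h3 i)
    left
    obtain ⟨a, ha0⟩ := Finset.card_eq_one.1 (h1 0)
    obtain ⟨i, hi0, hia⟩ : ∃ i : Fin 5, i ≠ 0 ∧ i ≠ a.1 := by
      have : ∀ j : Fin 5, ∃ i : Fin 5, i ≠ 0 ∧ i ≠ j := by decide
      exact this a.1
    refine ⟨S, I 0, I i, J 0, J i, P 0, P i, hSc.1, Or.inr (Or.inr (Or.inl ⟨x, trivial, ?_, ?_⟩))⟩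
    · have hD0 : D 0 ∉ Submodule.span (ZMod 2) (Set.range W) := fun h => by
        obtain ⟨a, ha, hcl⟩ := hspanD 0 h
        exact hone 0 (h1 0) a ha hcl
      have hD0i : LinearIndependent (ZMod 2) (fun o : Option _ => o.elim (D 0) W) :=
        linearIndependent_option.2 ⟨hWi, hD0⟩
      refine linearIndependent_option.2 ⟨hD0i, ?_⟩
      refine notMem_span_of_functional (L i) ?_ ?_
      · rintro (_ | e)
        · change L i (D 0) = 0
          rw [hLD, ha0, Finset.sum_singleton, if_neg (fun h => hia (hclsfst _ _ h).symm),
            if_neg (fun h => hi0 (hclsfst _ _ h).symm)]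
          simp
        · exact hLW i e
      · change L i (D i) ≠ 0
        rw [hLD, if_pos rfl, Finset.sum_eq_zero fun σ hσ => if_neg (hone i (h1 i) σ hσ),
          if_pos (hclsP i)]
        simp
    · rintro (_ | _ | e)
      · exact hDk i
      · exact hDk 0
      · exact hWk e
  -- one sum of three together with a collision that does not follow from the tree
  obtain ⟨i3, hi3⟩ := h3
  by_cases hDs : ∃ i, D i ∉ Submodule.span (ZMod 2) (Set.range W)
  · obtain ⟨i, hi⟩ := hDs
    left
    refine ⟨S, I i3, I i, J 0, J i, P 0, P i, hSc.1, Or.inr (Or.inl ⟨hIS i3, hi3, x, hin i3, ?_, ?_⟩)⟩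
    · exact linearIndependent_option.2 ⟨hWi, hi⟩
    · rintro (_ | e)
      · exact hDk i
      · exact hWk e
  push Not at hDs
  have h3 : ∀ i, (I i).card = 3 := by
    intro i
    refine (h13 i).resolve_left fun h1 => ?_
    obtain ⟨a, ha, hcl⟩ := hspanD i (hDs i)
    exact hone i h1 a ha hcl
  -- From here on, every missing key is a sum of three and all its collisions follow from the tree.
  -- One of the copies contains none of the three slots of `I 0`; its missing key involves the new
  -- slot `a` of its own class.
  obtain ⟨i, hi⟩ : ∃ i : Fin 5, i ∉ (I 0).image Prod.fst := by
    by_contra h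
    push Not at h
    have h1 : (Finset.univ : Finset (Fin 5)) ⊆ (I 0).image Prod.fst := fun i _ => h i
    have h2 := (Finset.card_le_card h1).trans Finset.card_image_le
    rw [h3 0, Finset.card_univ, Fintype.card_fin] at h2
    omega
  obtain ⟨a, haI, hcl⟩ := hspanD i (hDs i)
  have ha0 : a ∉ I 0 := fun h => hi (by
    rw [← hclsfst i a hcl]; exact Finset.mem_image_of_mem _ h)
  by_cases h2 : 2 ≤ (I i \ I 0).card
  · left
    exact ⟨S, I 0, I i, J 0, J 0, P 0, P 0, hSc.1, Or.inr (Or.inr (Or.inr (Or.inl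
      ⟨hIS 0, h3 0, hIS i, h2, x, ⟨hin 0, hin i⟩, hWi, hWk⟩)))⟩
  have hsd : I i \ I 0 = {a} := by
    have hm : a ∈ I i \ I 0 := Finset.mem_sdiff.2 ⟨haI, ha0⟩
    symm
    apply Finset.eq_of_subset_of_card_le (by simpa using hm)
    rw [Finset.card_singleton]; omega
  set B := I i ∩ I 0 with hB
  have hBI : insert a B = I i := by
    rw [← Finset.sdiff_union_inter (I i) (I 0), hsd, ← hB]; rfl
  have haB : a ∉ B := fun h => ha0 (Finset.mem_inter.1 h).2
  have hBc : B.card = 2 := by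
    have h := h3 i
    rw [← hBI, Finset.card_insert_of_notMem haB] at h
    omega
  have hu : (I 0 \ B).card = 1 := by
    rw [Finset.card_sdiff_of_subset Finset.inter_subset_right, hBc, h3 0]
  obtain ⟨u, hu⟩ := Finset.card_eq_one.1 hu
  have huB : u ∉ B := (Finset.mem_sdiff.1 (hu ▸ Finset.mem_singleton_self u)).2
  have huI : insert u B = I 0 := by
    rw [← Finset.sdiff_union_of_subset (Finset.inter_subset_right : B ⊆ I 0), hu]; rfl
  by_cases hR : (cnt X 2 (∑ σ ∈ B, xh x σ) : ℝ) ≤ R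
  · left
    refine ⟨S, B, ∅, J 0, J 0, u, a, hSc.1, Or.inr (Or.inr (Or.inr (Or.inr
      ⟨hBc, huB, ?_, ?_, hIS i haI, x, ⟨?_, hR, ?_⟩, hWi, hWk⟩)))⟩
    · rw [huI]; exact ha0
    · rw [huI]; exact hIS 0
    · rw [huI]; exact hin 0
    · rw [hBI]; exact hin i
  · -- the missing key and `a` collide and differ by the sum over `B`
    right
    refine ⟨J i, ∑ σ ∈ B, xh x σ, ?_, not_le.1 hR, ?_⟩
    · intro h0
      have h1 := linearIndepOn_finset_iff.1 (hxi.mono (t := (B : Set (Fin 5 × Ω)))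
        (by exact_mod_cast (hBI ▸ Finset.subset_insert a B : B ⊆ I i).trans (hIS i)))
        (fun _ => 1) (by simpa using h0)
      obtain ⟨σ, hσ⟩ := Finset.card_pos.1 (by rw [hBc]; norm_num : 0 < B.card)
      exact one_ne_zero (h1 σ hσ)
    · have h1 : ∑ σ ∈ I i, z σ = z a + ∑ σ ∈ B, z σ := by
        rw [← hBI, Finset.sum_insert haB]
      rw [hIz i] at h1
      have h2 := congrArg (fun v => ev T (Pi.single (J i) v)) h1
      simp only [Pi.single_add, map_add, hevz] at h2
      rw [ha i _ (hlr i), hcls_ev i a hcl] at h2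
      rw [hxs B (((Finset.subset_insert a B).trans hBI.subset).trans (hIS i))]
      exact left_eq_add.1 h2

end dichotomy

end TabChoice

/-! ### Probabilities of bad codes and heavy collisions -/

namespace TabChoice

section probability

variable {d c b : ℕ} {A : Type} [Fintype A] [DecidableEq A]

/-- The shape shared by all first-moment bounds: `N` assignments of `m` keys, where two of the
slots are determined up to `D` ways, against `k - 1` collisions. -/
lemma moment_arith {m N D g ρ C₁ E : ℝ} {k : ℕ} (hk : 2 ≤ k) (hm : 0 ≤ m) (hD0 : 0 ≤ D)
    (hN : m = 0 → N = 0) (hC : 1 ≤ C₁) (hg : 0 < g) (hρ : 0 < ρ) (hmg : m ≤ C₁ * g)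
    (h : m ^ 2 * N ≤ D * m ^ k) (hD : D ≤ E * (g / ρ)) :
    N / g ^ (k - 1) ≤ E * C₁ ^ k / ρ := by
  have hE : 0 ≤ E := by
    by_contra hE
    have : E * (g / ρ) < 0 := mul_neg_of_neg_of_pos (not_le.1 hE) (by positivity)
    linarith
  rcases hm.eq_or_lt with h0 | h0
  · rw [hN h0.symm, zero_div]; positivity
  obtain ⟨j, rfl⟩ := Nat.exists_eq_add_of_le hk
  have h1 : N ≤ D * m ^ j := by
    have h2 : m ^ 2 * N ≤ m ^ 2 * (D * m ^ j) := by
      refine h.trans (le_of_eq ?_)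
      rw [pow_add]; ring
    exact le_of_mul_le_mul_left h2 (by positivity)
  have h2 : N ≤ E * (g / ρ) * (C₁ * g) ^ j := h1.trans (by gcongr)
  rw [show 2 + j - 1 = j + 1 by omega, div_le_iff₀ (by positivity)]
  refine h2.trans ?_
  rw [mul_pow]
  calc E * (g / ρ) * (C₁ ^ j * g ^ j) = E * C₁ ^ j / ρ * g ^ (j + 1) := by rw [pow_succ]; ring
    _ ≤ E * C₁ ^ (2 + j) / ρ * g ^ (j + 1) := by
      gcongr
      omega

variable {G : Type} [Fintype G] [DecidableEq G]

omit [Fintype G] in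
lemma card_edges (t : Tree d G) {S : Finset G} (h : t.root ∈ S) :
    Fintype.card {σ // σ ∈ S.erase t.root} = S.card - 1 := by
  rw [Fintype.card_coe, Finset.card_erase_of_mem h]

/-- In each of the five alternatives, the number of assignments is multiplied by `2 ^ (-b)` for
every independent collision. The threshold `C₁ * 2 ^ b / ρ` with `ρ = 2 ^ (b / 4)` is chosen so that a
factor `ρ` is gained everywhere. -/
lemma pr_badCode_le (X : Finset (Fin c → A)) (t : Tree d G) (S I I' : Finset G) (J J' : Fin d)
    (P P' : G) {C₁ ρ : ℝ} (hC : 1 ≤ C₁) (hρ : 1 ≤ ρ) (hρb : ρ ^ 4 = 2 ^ b)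
    (hm : (X.card : ℝ) ≤ C₁ * 2 ^ b) :
    pr (BadCode (b := b) X t S (C₁ * (2 ^ b / ρ)) I I' J J' P P') ≤
      5 * ((720 ^ c) ^ 2 * C₁ * C₁ ^ (Fintype.card G + 2) / ρ) := by
  classical
  set g : ℝ := 2 ^ b with hgdef
  set q : ℝ := 720 ^ c with hq
  set m : ℝ := (X.card : ℝ) with hmdef
  have hg : 0 < g := by positivity
  have hq1 : 1 ≤ q := one_le_pow₀ (by norm_num)
  have hm0 : 0 ≤ m := by positivity
  have hρ0 : 0 < ρ := by linarith
  have hgρ : g / ρ = ρ ^ 3 := by rw [← hρb]; field_simp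
  set B : ℝ := q ^ 2 * C₁ * C₁ ^ (Fintype.card G + 2) / ρ with hB
  have hB0 : 0 ≤ B := by positivity
  by_cases hr : t.root ∈ S
  swap
  · have : pr (BadCode (b := b) X t S (C₁ * (g / ρ)) I I' J J' P P') ≤
        pr (fun _ : Tabs d c b A => False) := pr_mono fun T h => hr h.1
    refine this.trans ?_
    unfold pr; simp; positivity
  have hS1 : 1 ≤ S.card := Finset.card_pos.2 ⟨_, hr⟩
  have hSG : S.card ≤ Fintype.card G := Finset.card_le_univ S
  -- the common shape of the bounds
  have key : ∀ (N D : ℝ) (k : ℕ), 2 ≤ k → k ≤ Fintype.card G + 2 → 0 ≤ D → (m = 0 → N = 0) →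
      m ^ 2 * N ≤ D * m ^ k → D ≤ q ^ 2 * C₁ * (g / ρ) → N / g ^ (k - 1) ≤ B := by
    intro N D k hk hkG hD0 hN h hD
    refine (moment_arith hk hm0 hD0 hN hC hg hρ0 hm h hD).trans ?_
    rw [hB]
    gcongr
  have hN0 : ∀ (Q : (S → X) → Prop) [DecidablePred Q], m = 0 → ((Finset.univ.filter Q).card : ℝ) = 0 := by
    intro Q _ h
    have h1 : ((Finset.univ.filter Q).card : ℝ) ≤ m ^ S.card := by
      rw [← card_slots X S]
      exact_mod_cast Finset.card_le_card (Finset.filter_subset _ _)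
    rw [h, zero_pow (by omega)] at h1
    exact le_antisymm h1 (by positivity)
  have hρ3 : 1 ≤ ρ ^ 3 := one_le_pow₀ hρ
  have hqC : 1 ≤ q * C₁ := one_le_mul_of_one_le_of_one_le hq1 hC
  have hDq : q ≤ q ^ 2 * C₁ * (g / ρ) := by
    rw [hgρ]
    calc q = q * 1 * 1 := by ring
      _ ≤ q * (q * C₁) * ρ ^ 3 := by gcongr
      _ = _ := by ring
  have hcancel : ∀ (N D : ℝ) (k i : ℕ), 0 ≤ D → (m = 0 → N = 0) →
      m ^ (i + 2) * N ≤ D * (m ^ i * m ^ k) → m ^ 2 * N ≤ D * m ^ k := by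
    intro N D k i hD h0 h
    rcases hm0.eq_or_lt with h1 | h1
    · rw [h0 h1.symm, mul_zero]; positivity
    · have : m ^ i * (m ^ 2 * N) ≤ m ^ i * (D * m ^ k) := by
        calc _ = m ^ (i + 2) * N := by rw [pow_add]; ring
          _ ≤ _ := h
          _ = _ := by ring
      exact le_of_mul_le_mul_left this (by positivity)
  have hEv1 : ∀ (Q : (S → X) → Prop) [DecidablePred Q], pr (Ev1 (b := b) X t S Q) ≤
      ((Finset.univ.filter Q).card : ℝ) / g ^ (S.card - 1) := by
    intro Q _
    rw [← card_edges t hr]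
    exact pr_first_moment Q fun x => edges t S (xh x)
  have hEv2 : ∀ (Q : (S → X) → Prop) [DecidablePred Q], pr (Ev2 (b := b) X t S Q J' I' P') ≤
      ((Finset.univ.filter Q).card : ℝ) / g ^ S.card := by
    intro Q _
    have h := pr_first_moment (b := b) Q fun x => fun o : Option {σ // σ ∈ S.erase t.root} =>
      o.elim (comb (xh x) J' I' P') (edges t S (xh x))
    rwa [Fintype.card_option, card_edges t hr, Nat.sub_add_cancel hS1] at h
  have hEv3 : pr (Ev3 (b := b) X t S J I P J' I' P') ≤
      m ^ S.card / g ^ (S.card + 1) := by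
    have h := pr_first_moment (b := b) (fun _ : S → X => True) fun x =>
      fun o : Option (Option {σ // σ ∈ S.erase t.root}) => o.elim (comb (xh x) J' I' P')
        fun o => o.elim (comb (xh x) J I P) (edges t S (xh x))
    rwa [Fintype.card_option, Fintype.card_option, card_edges t hr, Nat.sub_add_cancel hS1,
      Finset.filter_true, card_slots] at h
  have h1 : pr (fun T : Tabs d c b A => I ⊆ S ∧ 5 ≤ I.card ∧
      Ev1 X t S (fun x => InX X (∑ σ ∈ I, xh x σ)) T) ≤ B := by
    by_cases h : I ⊆ S ∧ 5 ≤ I.card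
    · refine (pr_mono fun T hT => hT.2.2).trans ((hEv1 _).trans (key _ q _ ?_ ?_ ?_ (hN0 _) ?_ hDq))
      · have := Finset.card_le_card h.1; omega
      · omega
      · positivity
      · refine hcancel _ _ _ 3 (by positivity) (hN0 _) ?_
        rw [← mul_assoc]
        exact count_five X h.1 h.2
    · refine (pr_mono (Q := fun _ => False) fun T hT => h ⟨hT.1, hT.2.1⟩).trans ?_
      simpa [pr] using hB0
  have h2 : pr (fun T : Tabs d c b A => I ⊆ S ∧ I.card = 3 ∧
      Ev2 X t S (fun x => InX X (∑ σ ∈ I, xh x σ)) J' I' P' T) ≤ B := by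
    by_cases h : I ⊆ S ∧ I.card = 3
    · refine (pr_mono fun T hT => hT.2.2).trans ((hEv2 _).trans
        (key _ q (S.card + 1) ?_ ?_ ?_ (hN0 _) ?_ hDq))
      · omega
      · omega
      · positivity
      · refine hcancel _ _ _ 1 (by positivity) (hN0 _) ?_
        refine (count_three X h.1 h.2).trans (le_of_eq ?_)
        simp only [hmdef, hq]
        ring
    · refine (pr_mono (Q := fun _ => False) fun T hT => h ⟨hT.1, hT.2.1⟩).trans ?_
      simpa [pr] using hB0
  have h3 : pr (Ev3 (b := b) X t S J I P J' I' P') ≤ B := by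
    refine hEv3.trans (key _ 1 (S.card + 2) ?_ ?_ ?_ ?_ ?_ (hq1.trans hDq))
    · omega
    · omega
    · positivity
    · intro h
      rw [h, zero_pow (by omega)]
    · rw [pow_add]
      exact le_of_eq (by ring)
  have h4 : pr (fun T : Tabs d c b A => I ⊆ S ∧ I.card = 3 ∧ I' ⊆ S ∧ 2 ≤ (I' \ I).card ∧
      Ev1 X t S (fun x => InX X (∑ σ ∈ I, xh x σ) ∧ InX X (∑ σ ∈ I', xh x σ)) T) ≤ B := by
    by_cases h : I ⊆ S ∧ I.card = 3 ∧ I' ⊆ S ∧ 2 ≤ (I' \ I).card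
    · obtain ⟨hI, h3, hI', h2⟩ := h
      refine (pr_mono fun T hT => hT.2.2.2.2).trans ((hEv1 _).trans
        (key _ (q ^ 2 * C₁ * ρ ^ 2) _ ?_ ?_ ?_ (hN0 _) ?_ ?_))
      · have := Finset.card_le_card hI; omega
      · omega
      · positivity
      · refine hcancel _ _ _ 3 (by positivity) (hN0 _) ?_
        refine (count_three_three X hI h3 hI' h2).trans ?_
        have hs : √(q * m ^ 3) ≤ q * C₁ * ρ ^ 2 * m := by
          rw [Real.sqrt_le_left (by positivity)]
          have hm1 : m ≤ C₁ * ρ ^ 4 := by rw [hρb]; exact hm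
          calc q * m ^ 3 = q * 1 * (m * m ^ 2) := by ring
            _ ≤ q * (q * C₁) * (C₁ * ρ ^ 4 * m ^ 2) := by gcongr
            _ = _ := by ring
        calc _ ≤ q * C₁ * ρ ^ 2 * m * (q * m ^ 2 * m ^ S.card) := by gcongr
          _ = _ := by ring
      · rw [hgρ]
        gcongr
        norm_num
    · refine (pr_mono (Q := fun _ => False) fun T hT =>
        h ⟨hT.1, hT.2.1, hT.2.2.1, hT.2.2.2.1⟩).trans ?_
      simpa [pr] using hB0
  have h5 : pr (fun T : Tabs d c b A => I.card = 2 ∧ P ∉ I ∧ P' ∉ insert P I ∧ insert P I ⊆ S ∧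
      P' ∈ S ∧ Ev1 X t S (fun x => InX X (∑ σ ∈ insert P I, xh x σ) ∧
        ((cnt X 2 (∑ σ ∈ I, xh x σ) : ℝ) ≤ C₁ * (g / ρ) ∧
          InX X (∑ σ ∈ insert P' I, xh x σ))) T) ≤ B := by
    by_cases h : I.card = 2 ∧ P ∉ I ∧ P' ∉ insert P I ∧ insert P I ⊆ S ∧ P' ∈ S
    · obtain ⟨hI, hP, hP', hS, hPS⟩ := h
      refine (pr_mono fun T hT => hT.2.2.2.2.2).trans ((hEv1 _).trans
        (key _ (C₁ * (g / ρ) * q) _ ?_ ?_ ?_ (hN0 _) ?_ ?_))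
      · have := Finset.card_le_card hS
        rw [Finset.card_insert_of_notMem hP] at this
        omega
      · omega
      · positivity
      · refine hcancel _ _ _ 2 (by positivity) (hN0 _) ?_
        refine (count_light X hI hP hP' hS hPS _ (by positivity)).trans (le_of_eq ?_)
        ring
      · calc C₁ * (g / ρ) * q = (q * 1 * C₁) * (g / ρ) := by ring
          _ ≤ (q * q * C₁) * (g / ρ) := by gcongr
          _ = _ := by ring
    · refine (pr_mono (Q := fun _ => False) fun T hT =>
        h ⟨hT.1, hT.2.1, hT.2.2.1, hT.2.2.2.1, hT.2.2.2.2.1⟩).trans ?_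
      simpa [pr] using hB0
  refine (pr_mono fun T hT => hT.2).trans ((pr_or_le _ _).trans ?_)
  have h345 := (pr_or_le (b := b) (Ev3 X t S J I P J' I' P') _).trans
    (add_le_add h3 ((pr_or_le _ _).trans (add_le_add h4 h5)))
  refine (add_le_add h1 ((pr_or_le _ _).trans (add_le_add h2 h345))).trans (le_of_eq ?_)
  ring

/-- The probability that the keys are dependent in one of the describable ways. -/
lemma pr_exists_badCode_le (X : Finset (Fin c → A)) (t : Tree d G) {C₁ ρ : ℝ} (hC : 1 ≤ C₁)
    (hρ : 1 ≤ ρ) (hρb : ρ ^ 4 = 2 ^ b) (hm : (X.card : ℝ) ≤ C₁ * 2 ^ b) :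
    pr (fun T : Tabs d c b A => ∃ S I I' J J' P P',
      BadCode X t S (C₁ * (2 ^ b / ρ)) I I' J J' P P' T) ≤
      5 * d ^ 2 * (720 ^ c) ^ 2 * C₁ ^ 3 * (32 * C₁) ^ Fintype.card G / ρ := by
  have h := pr_exists_le_card (b := b)
    (Finset.univ : Finset ((Finset G × Finset G × Finset G) × (Fin d × Fin d) × (G × G)))
    (fun z => BadCode X t z.1.1 (C₁ * (2 ^ b / ρ)) z.1.2.1 z.1.2.2 z.2.1.1 z.2.1.2 z.2.2.1 z.2.2.2)
    _ (fun z _ => pr_badCode_le X t _ _ _ _ _ _ _ hC hρ hρb hm)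
  refine (pr_mono ?_).trans (h.trans ?_)
  · rintro T ⟨S, I, I', J, J', P, P', hT⟩
    exact ⟨((S, I, I'), (J, J'), (P, P')), Finset.mem_univ _, hT⟩
  · rw [Finset.card_univ]
    simp only [Fintype.card_prod, Fintype.card_finset, Fintype.card_fin]
    set k := Fintype.card G
    have hk : (k : ℝ) ≤ 2 ^ k := by exact_mod_cast Nat.lt_two_pow_self.le
    push_cast
    calc _ = 5 * d ^ 2 * (720 ^ c) ^ 2 * C₁ ^ 3 * (8 ^ k * (k * k) * C₁ ^ k) / ρ := by
          rw [show (8:ℝ) = 2 * 2 * 2 by norm_num, mul_pow, mul_pow, pow_add]; ring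
      _ ≤ 5 * d ^ 2 * (720 ^ c) ^ 2 * C₁ ^ 3 * (8 ^ k * (2 ^ k * 2 ^ k) * C₁ ^ k) / ρ := by gcongr
      _ = _ := by rw [← mul_pow, ← mul_pow, ← mul_pow]; norm_num

/-- There are few heavy differences, and each of them collides with probability `2 ^ (-b)`. -/
lemma pr_heavy_le (X : Finset (Fin c → A)) {C₁ ρ : ℝ} (hC : 1 ≤ C₁)
    (hρ : 1 ≤ ρ) (hρb : ρ ^ 4 = 2 ^ b) (hm : (X.card : ℝ) ≤ C₁ * 2 ^ b) :
    pr (Heavy (d := d) (b := b) X (C₁ * (2 ^ b / ρ))) ≤ d * 720 ^ c / ρ := by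
  classical
  set R : ℝ := C₁ * (2 ^ b / ρ) with hR
  have hρ0 : 0 < ρ := by linarith
  set s := Finset.univ.filter fun v : Vec c A => R < cnt X 2 v with hs
  have hcard : (s.card : ℝ) ≤ 720 ^ c * ρ ^ 2 := by
    have h := card_heavy_le X R (by positivity)
    have hR0 : 0 < R ^ 2 := by positivity
    refine le_of_mul_le_mul_right (h.trans ?_) hR0
    calc _ ≤ 720 ^ c * (C₁ * 2 ^ b) ^ 2 := by gcongr
      _ = _ := by rw [hR]; field_simp
  have h := pr_exists_le_card (b := b) ((Finset.univ : Finset (Fin d)) ×ˢ s)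
    (fun z (T : Tabs d c b A) => z.2 ≠ 0 ∧ ev T (Pi.single z.1 z.2) = 0) (1 / 2 ^ b) (by
      rintro ⟨J, v⟩ -
      by_cases hv : v = 0
      · simp [hv, pr]
      have h1 := pr_kill (b := b) (fun _ : Unit => (Pi.single J v : Fin d → Vec c A))
        (LinearIndependent.of_subsingleton () (by simpa using hv))
      refine le_trans (pr_mono ?_) (h1.trans (by simp)).le
      exact fun T hT _ => hT.2)
  refine (pr_mono ?_).trans (h.trans ?_)
  · rintro T ⟨J, v, hv, hRv, h0⟩
    exact ⟨(J, v), by simp [hs, hRv], hv, h0⟩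
  · rw [Finset.card_product, Finset.card_univ, Fintype.card_fin]
    push_cast
    calc (d : ℝ) * s.card * (1 / 2 ^ b) ≤ d * (720 ^ c * ρ ^ 2) * (1 / 2 ^ b) := by gcongr
      _ = d * 720 ^ c / ρ ^ 2 := by rw [← hρb]; field_simp
      _ ≤ d * 720 ^ c / ρ := by
        gcongr
        nlinarith

end probability

end TabChoice

/-! ### Chains of offsets and generalized Fibonacci numbers -/

namespace TabChoice

section chains

/-- Whether the offset `N` may be put in front of a chain of offsets: the first offset of a chain
is divisible by `d`, and consecutive offsets are incongruent modulo `d`. -/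
def ok (d N : ℕ) : List ℕ → Prop
  | [] => N % d = 0
  | n :: _ => n % d ≠ N % d

instance (d N : ℕ) : DecidablePred (ok d N) := fun o => by
  cases o <;> unfold ok <;> infer_instance

/-- The chains of offsets less than `N`, largest offset first. -/
def chains (d : ℕ) : ℕ → Finset (List ℕ)
  | 0 => {[]}
  | N + 1 => chains d N ∪ ((chains d N).filter (ok d N)).image (N :: ·)

lemma nil_mem_chains (d N : ℕ) : [] ∈ chains d N := by
  induction N with
  | zero => simp [chains]
  | succ N ih => simp [chains, ih]

lemma cons_mem_chains {d N n : ℕ} {o : List ℕ} :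
    n :: o ∈ chains d N ↔ n < N ∧ o ∈ chains d n ∧ ok d n o := by
  induction N with
  | zero => simp [chains]
  | succ N ih =>
    simp only [chains, Finset.mem_union, ih, Finset.mem_image, Finset.mem_filter, List.cons.injEq]
    constructor
    · rintro (h | ⟨_, h, rfl, rfl⟩)
      · exact ⟨h.1.trans (Nat.lt_succ_self _), h.2⟩
      · exact ⟨Nat.lt_succ_self _, h⟩
    · rintro ⟨h1, h2⟩
      rcases Nat.lt_succ_iff_lt_or_eq.1 h1 with h | rfl
      · exact Or.inl ⟨h, h2⟩
      · exact Or.inr ⟨o, h2, rfl, rfl⟩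

lemma chains_mono {d N M : ℕ} (h : N ≤ M) : chains d N ⊆ chains d M := by
  intro o ho
  cases o with
  | nil => exact nil_mem_chains d M
  | cons n o =>
    rw [cons_mem_chains] at ho ⊢
    exact ⟨ho.1.trans_le h, ho.2⟩

/-- The number of chains with largest offset `n`. -/
def numChains (d n : ℕ) : ℕ := ((chains d n).filter (ok d n)).card

lemma card_chains (d N : ℕ) :
    (chains d N).card = 1 + ∑ n ∈ Finset.range N, numChains d n := by
  induction N with
  | zero => simp [chains]
  | succ N ih =>
    rw [chains, Finset.card_union_of_disjoint, Finset.card_image_of_injective,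
      Finset.sum_range_succ, ih, numChains, add_assoc]
    · exact fun _ _ h => (List.cons.inj h).2
    · rw [Finset.disjoint_left]
      intro o ho h
      obtain ⟨o', _, rfl⟩ := Finset.mem_image.1 h
      exact lt_irrefl _ (cons_mem_chains.1 ho).1

lemma card_filter_ok (d N r : ℕ) : ((chains d N).filter (ok d r)).card =
    (if r % d = 0 then 1 else 0) +
      ∑ n ∈ Finset.range N, if n % d ≠ r % d then numChains d n else 0 := by
  induction N with
  | zero =>
    have h : ok d r [] ↔ r % d = 0 := Iff.rfl
    simp only [chains, Finset.range_zero, Finset.sum_empty, add_zero, Finset.filter_singleton, h]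
    split_ifs <;> simp
  | succ N ih =>
    rw [chains, Finset.filter_union, Finset.card_union_of_disjoint, Finset.sum_range_succ, ih,
      add_assoc]
    · congr 2
      by_cases h : N % d ≠ r % d
      · rw [if_pos h, Finset.filter_true_of_mem, Finset.card_image_of_injective]
        · rfl
        · exact fun _ _ h => (List.cons.inj h).2
        · intro o ho
          obtain ⟨o', _, rfl⟩ := Finset.mem_image.1 ho
          exact h
      · rw [if_neg h, Finset.filter_false_of_mem, Finset.card_empty]
        intro o ho
        obtain ⟨o', _, rfl⟩ := Finset.mem_image.1 ho
        exact h
    · apply Finset.disjoint_filter_filter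
      rw [Finset.disjoint_left]
      intro o ho h
      obtain ⟨o', _, rfl⟩ := Finset.mem_image.1 h
      exact lt_irrefl _ (cons_mem_chains.1 ho).1

lemma numChains_eq (d n : ℕ) : numChains d n = (if n % d = 0 then 1 else 0) +
      ∑ i ∈ Finset.range n, if i % d ≠ n % d then numChains d i else 0 :=
  card_filter_ok d n n

lemma numChains_zero (d : ℕ) : numChains d 0 = 1 := by
  rw [numChains_eq]; simp

lemma numChains_of_lt {d n : ℕ} (h0 : 0 < n) (h : n < d) :
    numChains d n = ∑ i ∈ Finset.range n, numChains d i := by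
  rw [numChains_eq, if_neg (by rw [Nat.mod_eq_of_lt h]; omega), zero_add]
  refine Finset.sum_congr rfl fun i hi => if_pos ?_
  have := Finset.mem_range.1 hi
  rw [Nat.mod_eq_of_lt h, Nat.mod_eq_of_lt (by omega)]
  omega

/-- The numbers of chains satisfy the `d`-step Fibonacci recurrence. -/
lemma numChains_add {d : ℕ} (hd : 0 < d) (n : ℕ) :
    numChains d (n + d) = ∑ i ∈ Finset.range d, numChains d (n + i) := by
  obtain ⟨e, rfl⟩ : ∃ e, d = e + 1 := ⟨d - 1, by omega⟩
  rw [numChains_eq, Finset.sum_range_add, Nat.add_mod_right, ← add_assoc, ← numChains_eq,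
    Finset.sum_range_succ', Finset.sum_range_succ', add_comm (numChains _ _)]
  simp only [add_zero, ne_eq, not_true_eq_false, if_false]
  congr 1
  refine Finset.sum_congr rfl fun i hi => if_pos ?_
  have hi := Finset.mem_range.1 hi
  intro h
  have h1 : (n + (i + 1)) ≡ n + 0 [MOD e + 1] := by simpa [Nat.ModEq] using h
  have h2 := (Nat.modEq_zero_iff_dvd.1 (Nat.ModEq.add_left_cancel' n h1))
  exact absurd (Nat.le_of_dvd (by omega) h2) (by omega)

end chains

section growth

variable {d : ℕ} {φ : ℝ}

lemma sum_pow_le_pow (hφ0 : 0 < φ) (hφ : φ ^ d = ∑ i ∈ Finset.range d, φ ^ i) {n : ℕ}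
    (hn : n ≤ d) : ∑ i ∈ Finset.range n, φ ^ i ≤ φ ^ n := by
  induction hn using Nat.decreasingInduction with
  | self => exact hφ.ge
  | of_succ n _ ih =>
    rw [Finset.sum_range_succ', pow_succ] at ih
    simp only [pow_succ, ← Finset.sum_mul, pow_zero] at ih
    have : (∑ i ∈ Finset.range n, φ ^ i) * φ ≤ φ ^ n * φ := by linarith
    exact le_of_mul_le_mul_right this hφ0

lemma phi_sq (hd : 2 ≤ d) (hφ0 : 0 < φ) (hφ : φ ^ d = ∑ i ∈ Finset.range d, φ ^ i) :
    φ + 1 ≤ φ ^ 2 := by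
  have := sum_pow_le_pow hφ0 hφ hd
  simp [Finset.sum_range_succ] at this
  linarith

lemma one_lt_phi (hd : 2 ≤ d) (hφ0 : 0 < φ) (hφ : φ ^ d = ∑ i ∈ Finset.range d, φ ^ i) :
    1 < φ := by
  nlinarith [phi_sq hd hφ0 hφ]

lemma numChains_le (hd : 2 ≤ d) (hφ0 : 0 < φ) (hφ : φ ^ d = ∑ i ∈ Finset.range d, φ ^ i) (n : ℕ) :
    (numChains d n : ℝ) ≤ φ ^ n := by
  induction n using Nat.strong_induction_on with
  | _ n ih =>
    rcases Nat.eq_zero_or_pos n with rfl | h0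
    · simp [numChains_zero]
    rcases lt_or_ge n d with h | h
    · rw [numChains_of_lt h0 h]
      push_cast
      exact (Finset.sum_le_sum fun i hi => ih i (Finset.mem_range.1 hi)).trans
        (sum_pow_le_pow hφ0 hφ h.le)
    · obtain ⟨k, rfl⟩ := Nat.exists_eq_add_of_le' h
      rw [numChains_add (by omega), pow_add, hφ, Finset.mul_sum]
      push_cast
      refine Finset.sum_le_sum fun i hi => ?_
      rw [← pow_add]
      exact ih _ (by have := Finset.mem_range.1 hi; omega)

lemma le_numChains (hd : 2 ≤ d) (hφ0 : 0 < φ) (hφ : φ ^ d = ∑ i ∈ Finset.range d, φ ^ i) (n : ℕ) :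
    φ ^ n ≤ φ ^ d * numChains d n := by
  have hφ1 := (one_lt_phi hd hφ0 hφ).le
  induction n using Nat.strong_induction_on with
  | _ n ih =>
    rcases lt_or_ge n d with h | h
    · have h1 : (1 : ℝ) ≤ numChains d n := by
        rcases Nat.eq_zero_or_pos n with rfl | h0
        · simp [numChains_zero]
        rw [numChains_of_lt h0 h]
        have := Finset.single_le_sum (f := fun i => numChains d i) (s := Finset.range n)
          (fun _ _ => Nat.zero_le _) (Finset.mem_range.2 h0)
        rw [numChains_zero] at this
        exact_mod_cast this
      calc φ ^ n ≤ φ ^ d * 1 := by rw [mul_one]; exact pow_le_pow_right₀ hφ1 h.le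
        _ ≤ _ := by gcongr
    · obtain ⟨k, rfl⟩ := Nat.exists_eq_add_of_le' h
      rw [numChains_add (by omega)]
      push_cast
      rw [Finset.mul_sum]
      calc φ ^ (k + d) = ∑ i ∈ Finset.range d, φ ^ (k + i) := by
            rw [pow_add, hφ, Finset.mul_sum]; simp only [pow_add]
        _ ≤ _ := Finset.sum_le_sum fun i hi => ih _ (by have := Finset.mem_range.1 hi; omega)

lemma card_chains_le (hd : 2 ≤ d) (hφ0 : 0 < φ) (hφ : φ ^ d = ∑ i ∈ Finset.range d, φ ^ i)
    (N : ℕ) : ((chains d N).card : ℝ) ≤ φ ^ (N + 1) := by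
  induction N with
  | zero => simpa [chains] using (one_lt_phi hd hφ0 hφ).le
  | succ N ih =>
    rw [card_chains, Finset.sum_range_succ, ← add_assoc, ← card_chains]
    push_cast
    have h1 := numChains_le hd hφ0 hφ N
    have h2 := mul_le_mul_of_nonneg_left (phi_sq hd hφ0 hφ) (pow_pos hφ0 N).le
    rw [pow_succ] at ih
    rw [show N + 1 + 1 = N + 2 from rfl, pow_add]
    linarith

end growth

end TabChoice

/-! ### The witness tree -/

namespace TabChoice

section slots

variable {d : ℕ} (j₀ j' : Fin d) (K s : ℕ)

/-- The rank of the topmost child of the root, where the rank of a key placed at height `η` in a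
bin of group `j` is `d * η + j`. -/
def topRank : ℕ := d * (K + 1 + s) + j'

/-- One more than the largest offset from `topRank` that occurs in the tree, so that the inner
keys have height at least `K + 1`. -/
def depth : ℕ := d * s + j' + 1

/-- The inner slots of the witness tree: the slot of the chain `n :: o` is a child of that of `o`
and stands for a key of rank `topRank - n`; the root is the empty chain. -/
abbrev Core := {o : List ℕ // o ∈ chains d (depth j' s)}

/-- The group of the bin in which the key of an inner slot is placed. -/
def coreGrp (K s : ℕ) : List ℕ → Fin d
  | [] => j₀
  | n :: _ => ⟨(topRank j' K s - n) % d, Nat.mod_lt _ j₀.pos⟩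

/-- The bins of an inner slot that are filled with leaves: those of the groups other than its own,
but only that of group `j'` for the root. -/
abbrev LeafBin := {p : Core j' s × Fin d //
  if p.1.1 = [] then p.2 = j' else p.2 ≠ coreGrp j₀ j' K s p.1.1}

/-- The slots of the witness tree: the inner slots and `K` leaves in every leaf bin. -/
abbrev Slot := Core j' s ⊕ (LeafBin j₀ j' K s × Fin K)

lemma tail_mem_chains {d N : ℕ} {o : List ℕ} (h : o ∈ chains d N) : o.tail ∈ chains d N := by
  cases o with
  | nil => exact h
  | cons n o =>
    rw [cons_mem_chains] at h
    exact chains_mono h.1.le h.2.1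

/-- The witness tree. -/
def slotTree : Tree d (Slot j₀ j' K s) where
  root := Sum.inl ⟨[], nil_mem_chains _ _⟩
  par
    | Sum.inl o => Sum.inl ⟨o.1.tail, tail_mem_chains o.2⟩
    | Sum.inr p => Sum.inl p.1.1.1
  grp
    | Sum.inl o => coreGrp j₀ j' K s o.1
    | Sum.inr p => p.1.1.2
  rk
    | Sum.inl o => o.1.length
    | Sum.inr p => p.1.1.1.1.length + 1
  rk_lt := by
    rintro (⟨o, ho⟩ | p) h
    · cases o with
      | nil => exact absurd rfl h
      | cons n o => simp
    · simp

variable {j₀ j'}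

lemma depth_le_topRank {n : ℕ} (h : n < depth j' s) : d * (K + 1) ≤ topRank j' K s - n := by
  unfold depth at h
  unfold topRank
  have : d * (K + 1 + s) = d * (K + 1) + d * s := by ring
  omega

lemma topRank_sub_mod {n : ℕ} (h : n ≤ topRank j' K s) (h0 : n % d = 0) :
    (topRank j' K s - n) % d = j' := by
  obtain ⟨e, rfl⟩ := Nat.dvd_of_mod_eq_zero h0
  have hd := j'.pos
  have he : e ≤ K + 1 + s := by
    have h2 := j'.2
    unfold topRank at h
    by_contra hlt
    have : d * (K + 1 + s + 1) ≤ d * e := Nat.mul_le_mul_left d (by omega)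
    rw [mul_add, mul_one] at this
    omega
  unfold topRank
  have h1 : d * e ≤ d * (K + 1 + s) := Nat.mul_le_mul_left d he
  rw [show d * (K + 1 + s) + j' - d * e = (j' : ℕ) + d * (K + 1 + s - e) by
    rw [Nat.mul_sub]; omega, Nat.add_mul_mod_self_left, Nat.mod_eq_of_lt j'.2]

lemma coreGrp_tail_ne (hj : j' ≠ j₀) {n : ℕ} {o : List ℕ} (h : n :: o ∈ chains d (depth j' s)) :
    coreGrp j₀ j' K s o ≠ coreGrp j₀ j' K s (n :: o) := by
  rw [cons_mem_chains] at h
  obtain ⟨hn, ho, hok⟩ := h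
  have hle : ∀ {n}, n < depth j' s → n ≤ topRank j' K s := by
    intro n hn
    have := depth_le_topRank K s hn
    have : 0 < d * (K + 1) := Nat.mul_pos j₀.pos (Nat.succ_pos _)
    omega
  cases o with
  | nil =>
    intro h
    apply hj
    rw [Fin.ext_iff] at h ⊢
    simp only [coreGrp] at h
    rw [h, topRank_sub_mod K s (hle hn) hok]
  | cons n₀ o =>
    intro h
    simp only [coreGrp, Fin.mk.injEq] at h
    have hn₀ := (cons_mem_chains.1 ho).1
    apply hok
    have h1 : (topRank j' K s - n) ≡ (topRank j' K s - n₀) [MOD d] := h.symm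
    have h2 := (h1.add_right (n + n₀))
    have e1 : topRank j' K s - n + (n + n₀) = topRank j' K s + n₀ := by have := hle hn; omega
    have e2 : topRank j' K s - n₀ + (n + n₀) = topRank j' K s + n := by
      have := hle (hn₀.trans hn); omega
    rw [e1, e2] at h2
    exact Nat.ModEq.add_left_cancel' _ h2

lemma slotTree_grp_ne (hj : j' ≠ j₀) (l : Slot j₀ j' K s) (hl : l ≠ (slotTree j₀ j' K s).root) :
    (slotTree j₀ j' K s).grp ((slotTree j₀ j' K s).par l) ≠ (slotTree j₀ j' K s).grp l := by
  rcases l with ⟨o, ho⟩ | ⟨⟨⟨⟨o, ho⟩, J⟩, hJ⟩, τ⟩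
  · cases o with
    | nil => exact absurd rfl hl
    | cons n o => exact coreGrp_tail_ne K s hj ho
  · simp only [slotTree]
    cases o with
    | nil => simp only [if_true] at hJ; rw [hJ]; exact hj.symm
    | cons n o => simpa using Ne.symm hJ

lemma card_core_le_card_leafBin (hd : 2 ≤ d) :
    Fintype.card (Core j' s) ≤ Fintype.card (LeafBin j₀ j' K s) := by
  have hne : ∀ J : Fin d, ∃ J', J' ≠ J := fun J => by
    have : Nontrivial (Fin d) := Fin.nontrivial_iff_two_le.2 hd
    exact exists_ne J
  choose f hf using hne
  refine Fintype.card_le_of_injective (fun o : Core j' s =>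
    (⟨(o, if o.1 = [] then j' else f (coreGrp j₀ j' K s o.1)), ?_⟩ : LeafBin j₀ j' K s)) ?_
  · by_cases h : o.1 = []
    · simp [h]
    · simp [h, hf]
  · intro o o' h
    exact congrArg (fun p : LeafBin j₀ j' K s => p.1.1) h

lemma card_leafBin_le : Fintype.card (LeafBin j₀ j' K s) ≤ d * Fintype.card (Core j' s) := by
  refine (Fintype.card_subtype_le _).trans ?_
  rw [Fintype.card_prod, Fintype.card_fin, mul_comm]

lemma card_slot_le (hd : 2 ≤ d) :
    Fintype.card (Slot j₀ j' K s) ≤ (K + 1) * Fintype.card (LeafBin j₀ j' K s) := by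
  have := card_core_le_card_leafBin (j₀ := j₀) (j' := j') K s hd
  rw [Fintype.card_sum, Fintype.card_prod, Fintype.card_fin]
  linarith

variable {φ : ℝ}

lemma card_leafBin_le_pow (hd : 2 ≤ d) (hφ0 : 0 < φ) (hφ : φ ^ d = ∑ i ∈ Finset.range d, φ ^ i) :
    (Fintype.card (LeafBin j₀ j' K s) : ℝ) ≤ d * φ ^ (d + 1) * (φ ^ d) ^ s := by
  have hφ1 := (one_lt_phi hd hφ0 hφ).le
  have h1 : (Fintype.card (LeafBin j₀ j' K s) : ℝ) ≤ d * (Fintype.card (Core j' s) : ℝ) := by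
    exact_mod_cast card_leafBin_le (j₀ := j₀) (j' := j') K s
  refine h1.trans ?_
  rw [mul_assoc]
  gcongr
  rw [Fintype.card_coe]
  refine (card_chains_le hd hφ0 hφ _).trans ?_
  rw [← pow_mul, ← pow_add]
  apply pow_le_pow_right₀ hφ1
  have := j'.2
  unfold depth
  omega

lemma pow_le_card_leafBin (hd : 2 ≤ d) (hφ0 : 0 < φ)
    (hφ : φ ^ d = ∑ i ∈ Finset.range d, φ ^ i) :
    (φ ^ d) ^ s ≤ φ ^ d * (Fintype.card (LeafBin j₀ j' K s) : ℝ) := by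
  have hφ1 := (one_lt_phi hd hφ0 hφ).le
  have h1 : Fintype.card (Core j' s) ≤ Fintype.card (LeafBin j₀ j' K s) :=
    card_core_le_card_leafBin K s hd
  have h2 : numChains d (d * s + j') ≤ Fintype.card (Core j' s) := by
    rw [Fintype.card_coe, card_chains, depth, Finset.sum_range_succ]
    omega
  calc (φ ^ d) ^ s = φ ^ (d * s) := (pow_mul _ _ _).symm
    _ ≤ φ ^ (d * s + j') := pow_le_pow_right₀ hφ1 (by omega)
    _ ≤ φ ^ d * numChains d (d * s + j') := le_numChains hd hφ0 hφ _
    _ ≤ _ := by gcongr; exact h2.trans h1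

end slots

end TabChoice

/-! ### Runs of Always-Go-Left fill the witness tree -/

namespace TabChoice

section process

variable {α β : Type*} [DecidableEq α] [DecidableEq β] {d : ℕ} {h : Fin d → α → β} {L : List α}
  {σ : α → Fin d}

/-- The height of a key: the load of its bin just after its insertion. -/
def height (h : Fin d → α → β) (L : List α) (σ : α → Fin d) (y : α) : ℕ :=
  loadAt h σ (L.take (L.idxOf y)) (h (σ y) y, σ y) + 1

omit [DecidableEq α] in
lemma loadAt_take_succ (B : β × Fin d) {t : ℕ} (ht : t < L.length) :
    loadAt h σ (L.take (t + 1)) B =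
      loadAt h σ (L.take t) B + if (h (σ L[t]) L[t], σ L[t]) = B then 1 else 0 := by
  unfold loadAt
  rw [List.take_succ_eq_append_getElem ht, List.filter_append, List.length_append]
  congr 1
  by_cases hB : (h (σ L[t]) L[t], σ L[t]) = B
  · simp [hB]
  · simp [hB]

/-- Loads grow in steps of one, so every height up to the load of a bin is attained. -/
lemma exists_height_take (hL : L.Nodup) (B : β × Fin d) {H : ℕ} (hH : 1 ≤ H) (n : ℕ)
    (hn : n ≤ L.length) (hB : H ≤ loadAt h σ (L.take n) B) :
    ∃ y ∈ L, (h (σ y) y, σ y) = B ∧ height h L σ y = H := by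
  induction n with
  | zero => simp [loadAt] at hB; omega
  | succ n ih =>
    have hn' : n < L.length := hn
    by_cases hle : H ≤ loadAt h σ (L.take n) B
    · exact ih hn'.le hle
    rw [loadAt_take_succ B hn'] at hB
    split_ifs at hB with hbin
    · refine ⟨L[n], List.getElem_mem hn', hbin, ?_⟩
      unfold height
      rw [hL.idxOf_getElem n hn', hbin]
      omega
    · omega

lemma exists_height (hL : L.Nodup) (B : β × Fin d) {H : ℕ} (hH : 1 ≤ H)
    (hB : H ≤ loadAt h σ L B) :
    ∃ y ∈ L, (h (σ y) y, σ y) = B ∧ height h L σ y = H :=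
  exists_height_take hL B hH L.length le_rfl (by rwa [List.take_length])

/-- Under Always-Go-Left, the bins offered to a key contain keys of all smaller ranks
`d * height + group`. -/
lemma exists_child (hL : L.Nodup) (hσ : alwaysGoLeftPlacement h L σ) {y : α} (hy : y ∈ L)
    (J : Fin d) {η : ℕ} (hη : 1 ≤ η) (hlt : d * η + J < d * height h L σ y + σ y) :
    ∃ y' ∈ L, σ y' = J ∧ h J y' = h J y ∧ height h L σ y' = η := by
  have ht : L.idxOf y < L.length := List.idxOf_lt_length_iff.2 hy
  have hget : L.get ⟨L.idxOf y, ht⟩ = y := by simp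
  have hload : η ≤ loadAt h σ (L.take (L.idxOf y)) (h J y, J) := by
    have h1 := hσ.1 ⟨L.idxOf y, ht⟩ J
    have h2 := hσ.2 ⟨L.idxOf y, ht⟩ J
    rw [hget] at h1 h2
    unfold height at hlt
    set l := loadAt h σ (L.take (L.idxOf y)) (h (σ y) y, σ y)
    have hs := (σ y).2
    simp only at h1 h2
    by_contra hcon
    rcases lt_or_ge J (σ y) with hJ | hJ
    · have h3 := h2 hJ
      have : d * (l + 1 + 1) ≤ d * η := Nat.mul_le_mul_left d (by omega)
      rw [mul_add d (l + 1)] at this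
      omega
    · have : d * (l + 1) ≤ d * η := Nat.mul_le_mul_left d (by omega)
      have hJ' : (σ y : ℕ) ≤ J := hJ
      omega
  obtain ⟨y', hy', hB, hh⟩ := exists_height_take hL (h J y, J) hη _ ht.le hload
  obtain ⟨h1, h2⟩ := Prod.mk.inj hB
  exact ⟨y', hy', h2, by rw [← h2, h1, h2], hh⟩

end process

section extraction

variable {α β : Type*} [DecidableEq α] [DecidableEq β] {d : ℕ} {h : Fin d → α → β} {L : List α}
  {σ : α → Fin d}

/-- Above a high key, the slots of the witness tree can be filled with keys of the run. -/
lemma exists_witness (hL : L.Nodup) (hσ : alwaysGoLeftPlacement h L σ) {j₀ j' : Fin d}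
    (hj : j' ≠ j₀) (K s : ℕ) {y : α} (hy : y ∈ L) (hg : σ y = j₀)
    (hh : K + s + 2 ≤ height h L σ y) :
    ∃ κ : Slot j₀ j' K s → α, κ (slotTree j₀ j' K s).root = y ∧ (∀ l, κ l ∈ L) ∧
      (∀ l, l ≠ (slotTree j₀ j' K s).root →
        h ((slotTree j₀ j' K s).grp l) (κ l) =
          h ((slotTree j₀ j' K s).grp l) (κ ((slotTree j₀ j' K s).par l))) ∧
      ∀ l l', l ≠ (slotTree j₀ j' K s).root → (l' = (slotTree j₀ j' K s).par l ∨
        (l' ≠ (slotTree j₀ j' K s).root ∧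
          (slotTree j₀ j' K s).par l' = (slotTree j₀ j' K s).par l ∧
          (slotTree j₀ j' K s).grp l' = (slotTree j₀ j' K s).grp l ∧ l' ≠ l)) → κ l' ≠ κ l := by
  have hd : 0 < d := j₀.pos
  -- the key of rank `d * η + J` in the bin of group `J` offered to `x`
  have hchild : ∀ (x : α) (J : Fin d) (η : ℕ), ∃ y', x ∈ L → 1 ≤ η →
      d * η + J < d * height h L σ x + σ x →
      y' ∈ L ∧ σ y' = J ∧ h J y' = h J x ∧ height h L σ y' = η := by
    intro x J η
    by_cases hx : x ∈ L ∧ 1 ≤ η ∧ d * η + J < d * height h L σ x + σ x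
    · obtain ⟨y', h1, h2⟩ := exists_child hL hσ hx.1 J hx.2.1 hx.2.2
      exact ⟨y', fun _ _ _ => ⟨h1, h2⟩⟩
    · exact ⟨x, fun h1 h2 h3 => absurd ⟨h1, h2, h3⟩ hx⟩
  choose child hchild using hchild
  let J : ℕ → Fin d := fun n => ⟨(topRank j' K s - n) % d, Nat.mod_lt _ hd⟩
  let kc : List ℕ → α := fun o =>
    o.rec y fun n _ x => child x (J n) ((topRank j' K s - n) / d)
  have hrank : ∀ n, d * ((topRank j' K s - n) / d) + J n = topRank j' K s - n := fun n =>
    Nat.div_add_mod _ _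
  have hge : ∀ n, n < depth j' s → K + 1 ≤ (topRank j' K s - n) / d := fun n hn => by
    rw [Nat.le_div_iff_mul_le hd, mul_comm]
    exact depth_le_topRank K s hn
  have hle : ∀ n, n < depth j' s → n ≤ topRank j' K s := by
    intro n hn
    have := depth_le_topRank K s hn
    have : 0 < d * (K + 1) := Nat.mul_pos hd (Nat.succ_pos _)
    omega
  have hroot : topRank j' K s < d * height h L σ y + σ y := by
    have : d * (K + s + 2) ≤ d * height h L σ y := Nat.mul_le_mul_left d hh
    unfold topRank
    have e : d * (K + s + 2) = d * (K + 1 + s) + d := by ring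
    have := j'.2
    omega
  -- the key of an inner slot has the right rank and collides with its parent
  have hstep : ∀ (n : ℕ) (o : List ℕ), n :: o ∈ chains d (depth j' s) → kc o ∈ L →
      topRank j' K s - n < d * height h L σ (kc o) + σ (kc o) →
      kc (n :: o) ∈ L ∧ σ (kc (n :: o)) = J n ∧ h (J n) (kc (n :: o)) = h (J n) (kc o) ∧
        height h L σ (kc (n :: o)) = (topRank j' K s - n) / d := by
    intro n o hno ho hlt
    refine hchild (kc o) (J n) _ ho ?_ ?_
    · have := hge n (cons_mem_chains.1 hno).1; omega
    · rw [hrank]; exact hlt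
  have hmain : ∀ o : List ℕ, o ∈ chains d (depth j' s) → kc o ∈ L ∧
      (∀ n o', o = n :: o' → σ (kc o) = J n ∧ h (J n) (kc o) = h (J n) (kc o') ∧
        height h L σ (kc o) = (topRank j' K s - n) / d) := by
    intro o
    induction o with
    | nil => exact fun _ => ⟨hy, fun n o' h => by simp at h⟩
    | cons n o ih =>
      intro hno
      obtain ⟨ho1, ho2⟩ := ih (tail_mem_chains hno)
      have hlt : topRank j' K s - n < d * height h L σ (kc o) + σ (kc o) := by
        cases o with
        | nil => exact lt_of_le_of_lt (Nat.sub_le _ _) hroot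
        | cons n₀ o =>
          obtain ⟨h1, _, h3⟩ := ho2 n₀ o rfl
          rw [h1, h3, hrank]
          have hn := (cons_mem_chains.1 hno)
          have h4 := (cons_mem_chains.1 hn.2.1).1
          have := hle n hn.1
          omega
      obtain ⟨h1, h2⟩ := hstep n o hno ho1 hlt
      refine ⟨h1, ?_⟩
      rintro n' o' e
      obtain ⟨rfl, rfl⟩ := List.cons.inj e
      exact h2
  have hgrp : ∀ o ∈ chains d (depth j' s), σ (kc o) = coreGrp j₀ j' K s o := by
    intro o ho
    cases o with
    | nil => exact hg
    | cons n o => exact ((hmain _ ho).2 n o rfl).1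
  have hht : ∀ o ∈ chains d (depth j' s), K + 1 ≤ height h L σ (kc o) := by
    intro o ho
    cases o with
    | nil => exact le_trans (by omega) hh
    | cons n o =>
      rw [((hmain _ ho).2 n o rfl).2.2]
      exact hge n (cons_mem_chains.1 ho).1
  have hleaf : ∀ (o : Core j' s) (I : Fin d) (τ : Fin K),
      child (kc o.1) I (τ + 1) ∈ L ∧ σ (child (kc o.1) I (τ + 1)) = I ∧
        h I (child (kc o.1) I (τ + 1)) = h I (kc o.1) ∧
        height h L σ (child (kc o.1) I (τ + 1)) = τ + 1 := by
    intro o I τ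
    refine hchild _ I _ (hmain _ o.2).1 (by omega) ?_
    have h1 := hht _ o.2
    have h2 : d * (τ + 1 + 1) ≤ d * height h L σ (kc o.1) :=
      Nat.mul_le_mul_left d (by have := τ.2; omega)
    rw [mul_add d (τ + 1 : ℕ)] at h2
    have := I.2
    omega
  refine ⟨Sum.elim (fun o => kc o.1) fun p => child (kc p.1.1.1.1) p.1.1.2 (p.2 + 1),
    rfl, ?_, ?_, ?_⟩
  · rintro (o | p)
    · exact (hmain _ o.2).1
    · exact (hleaf _ _ _).1
  · rintro (⟨o, ho⟩ | p) hl
    · cases o with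
      | nil => exact absurd rfl hl
      | cons n o => exact ((hmain _ ho).2 n o rfl).2.1
    · exact (hleaf _ _ _).2.2.1
  · have hσgrp : ∀ l : Slot j₀ j' K s, σ (Sum.elim (fun o : Core j' s => kc o.1)
        (fun p : LeafBin j₀ j' K s × Fin K => child (kc p.1.1.1.1) p.1.1.2 (p.2 + 1)) l) =
        (slotTree j₀ j' K s).grp l := by
      rintro (o | p)
      · exact hgrp _ o.2
      · exact (hleaf _ _ _).2.1
    intro l l' hl hll heq
    rcases hll with rfl | ⟨hl', hpar, hgr, hne⟩
    · apply slotTree_grp_ne K s hj l hl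
      rw [← hσgrp, ← hσgrp, heq]
    · have hheq := congrArg (height h L σ) heq
      rcases l with ⟨o, ho⟩ | p <;> rcases l' with ⟨o', ho'⟩ | p'
      · cases o with
        | nil => exact absurd rfl hl
        | cons n o =>
        cases o' with
        | nil => exact absurd rfl hl'
        | cons n' o' =>
        simp only [slotTree, Sum.inl.injEq, Subtype.mk.injEq, List.tail_cons] at hpar
        subst hpar
        simp only [Sum.elim_inl] at hheq
        rw [((hmain _ ho).2 n o' rfl).2.2, ((hmain _ ho').2 n' o' rfl).2.2] at hheq
        have e3 : J n' = J n := hgr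
        have e4 : topRank j' K s - n' = topRank j' K s - n := by
          rw [← hrank n', ← hrank n, hheq, e3]
        have h1 := hle n (cons_mem_chains.1 ho).1
        have h2 := hle n' (cons_mem_chains.1 ho').1
        obtain rfl : n' = n := by omega
        exact hne rfl
      · cases o with
        | nil => exact absurd rfl hl
        | cons n o =>
        simp only [Sum.elim_inl, Sum.elim_inr] at hheq
        rw [((hmain _ ho).2 n o rfl).2.2, (hleaf _ _ _).2.2.2] at hheq
        have := hge n (cons_mem_chains.1 ho).1
        have := p'.2.2
        omega
      · cases o' with
        | nil => exact absurd rfl hl'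
        | cons n o =>
        simp only [Sum.elim_inl, Sum.elim_inr] at hheq
        rw [((hmain _ ho').2 n o rfl).2.2, (hleaf _ _ _).2.2.2] at hheq
        have := hge n (cons_mem_chains.1 ho').1
        have := p.2.2
        omega
      · simp only [Sum.elim_inr] at hheq
        rw [(hleaf _ _ _).2.2.2, (hleaf _ _ _).2.2.2] at hheq
        apply hne
        obtain ⟨⟨⟨a, I⟩, hp⟩, τ⟩ := p
        obtain ⟨⟨⟨a', I'⟩, hp'⟩, τ'⟩ := p'
        simp only [slotTree, Sum.inl.injEq] at hpar hgr
        simp only at hheq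
        subst hpar hgr
        have : τ' = τ := Fin.ext (by omega)
        rw [this]

end extraction

end TabChoice

/-! ### First moments over independent keys -/

namespace TabChoice

section many

variable {c : ℕ} {A : Type} [Fintype A] [DecidableEq A]

omit [Fintype A] in
/-- The span of `t` keys contains at most `t ^ c` keys, since each position character of a key in
the span occurs at the same position in one of the `t` keys. -/
lemma card_span_le (I Y : Finset (Fin c → A))
    (h : ∀ y ∈ Y, vec y ∈ Submodule.span (ZMod 2) (vec '' (I : Set (Fin c → A)))) :
    Y.card ≤ I.card ^ c := by
  have hsub : Y ⊆ Fintype.piFinset fun i => I.image fun x => x i := by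
    intro y hy
    rw [Fintype.mem_piFinset]
    intro i
    by_contra hi
    have hker : Submodule.span (ZMod 2) (vec '' (I : Set (Fin c → A))) ≤
        LinearMap.ker ((LinearMap.proj (y i) : (A → ZMod 2) →ₗ[ZMod 2] ZMod 2).comp
          (LinearMap.proj i : Vec c A →ₗ[ZMod 2] (A → ZMod 2))) := by
      rw [Submodule.span_le]
      rintro _ ⟨x, hx, rfl⟩
      have : x i ≠ y i := fun he => hi (Finset.mem_image.2 ⟨x, hx, he⟩)
      simp [vec, this]
    have := hker (h y hy)
    simp [vec] at this
  refine (Finset.card_le_card hsub).trans ?_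
  rw [Fintype.card_piFinset]
  refine (Finset.prod_le_pow_card _ _ _ fun i _ => Finset.card_image_le).trans ?_
  simp

omit [Fintype A] in
/-- Any `t ^ c + 1` keys contain `t + 1` independent ones. -/
lemma exists_indep (Y : Finset (Fin c → A)) (t : ℕ) (h : t ^ c < Y.card) :
    ∃ f : Fin (t + 1) → (Fin c → A), (∀ i, f i ∈ Y) ∧
      LinearIndependent (ZMod 2) fun i => vec (f i) := by
  have key : ∀ n ≤ t + 1, ∃ I ⊆ Y, I.card = n ∧
      LinearIndepOn (ZMod 2) (vec : (Fin c → A) → Vec c A) (I : Set (Fin c → A)) := by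
    intro n
    induction n with
    | zero => exact fun _ => ⟨∅, by simp, by simp, by simp⟩
    | succ n ih =>
      intro hn
      obtain ⟨I, hI, hc, hi⟩ := ih (by omega)
      have : ∃ y ∈ Y, vec y ∉ Submodule.span (ZMod 2) (vec '' (I : Set (Fin c → A))) := by
        by_contra hcon
        push Not at hcon
        have h1 := card_span_le I Y hcon
        have h2 : I.card ^ c ≤ t ^ c := Nat.pow_le_pow_left (by omega) c
        omega
      obtain ⟨y, hy, hys⟩ := this
      have hyI : y ∉ I := fun h => hys (Submodule.subset_span ⟨y, h, rfl⟩)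
      refine ⟨insert y I, Finset.insert_subset hy hI, by
        rw [Finset.card_insert_of_notMem hyI, hc], ?_⟩
      rw [Finset.coe_insert]
      exact hi.insert hys
  obtain ⟨I, hI, hc, hi⟩ := key (t + 1) le_rfl
  refine ⟨fun i => (I.equivFinOfCardEq hc).symm i, fun i => hI (Subtype.property _), ?_⟩
  exact LinearIndependent.comp hi (fun i => (I.equivFinOfCardEq hc).symm i)
    (I.equivFinOfCardEq hc).symm.injective

end many

section clean

variable {d c b : ℕ} {A : Type} [Fintype A] [DecidableEq A]

/-- The keys `x l` collide as prescribed by the edges of the tree. -/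
def Coll {Ω : Type} (t : Tree d Ω) (T : Tabs d c b A) (x : Ω → Fin c → A) : Prop :=
  ∀ l, l ≠ t.root → simpleTab (T (t.grp l)) (x l) = simpleTab (T (t.grp l)) (x (t.par l))

lemma pr_mul_le {Y : Type*} [Fintype Y] (Q : Tabs d c b A → Prop) (P : Y → Tabs d c b A → Prop)
    (M : ℕ) (h : ∀ T, Q T → ∃ s : Finset Y, M ≤ s.card ∧ ∀ y ∈ s, P y T) :
    pr Q * M ≤ ∑ y, pr (P y) := by
  classical
  simp only [pr_eq]
  rw [← Finset.sum_div, div_mul_eq_mul_div]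
  gcongr
  have h1 : ∀ T ∈ Finset.univ.filter Q, M ≤ (Finset.univ.filter fun y => P y T).card := by
    intro T hT
    obtain ⟨s, hs, hP⟩ := h T (Finset.mem_filter.1 hT).2
    exact hs.trans (Finset.card_le_card fun y hy => by simpa using hP y hy)
  have h2 : (Finset.univ.filter Q).card * M ≤
      ∑ T ∈ Finset.univ.filter Q, (Finset.univ.filter fun y => P y T).card := by
    rw [← smul_eq_mul]
    exact Finset.card_nsmul_le_sum _ _ _ h1
  have h3 : ∑ T ∈ Finset.univ.filter Q, (Finset.univ.filter fun y => P y T).card ≤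
      ∑ y, (Finset.univ.filter (P y)).card := by
    refine (Finset.sum_le_sum_of_subset (Finset.subset_univ _)).trans (le_of_eq ?_)
    simp only [Finset.card_filter]
    exact Finset.sum_comm
  exact_mod_cast h2.trans h3

/-- The probability that fixed independent keys collide along the edges of a tree. -/
lemma pr_tree_le {Ω : Type} [Fintype Ω] [DecidableEq Ω] (t : Tree d Ω) (x : Ω → Fin c → A) :
    pr (fun T : Tabs d c b A => (LinearIndependent (ZMod 2) fun l => vec (x l)) ∧ Coll t T x) ≤
      1 / (2 ^ b : ℝ) ^ (Fintype.card Ω - 1) := by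
  by_cases hx : LinearIndependent (ZMod 2) fun l => vec (x l)
  swap
  · simp [hx, pr]
  have hw := edges_indep (z := fun l => vec (x l)) t (S := Finset.univ) ⟨by simp, by simp⟩
    (by rw [Finset.coe_univ]; exact linearIndepOn_univ_iff.2 hx)
  have h := pr_kill (b := b) _ hw
  rw [Fintype.card_coe, Finset.card_erase_of_mem (Finset.mem_univ _), Finset.card_univ] at h
  rw [← h]
  refine pr_mono ?_
  rintro T ⟨_, hT⟩ ⟨l, hl⟩
  simp only [edge, Pi.single_add, map_add, ev_single_vec]
  rw [hT l (Finset.ne_of_mem_erase hl), ZModModule.add_self]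

/-- First moment with symmetries: if every layout of a tree yields `Fintype.card Γ` layouts, the
expected number of layouts exceeds the probability that there is one by that factor. -/
lemma pr_layout_mul_le {Ω Γ : Type} [Fintype Ω] [DecidableEq Ω] [Fintype Γ] (t : Tree d Ω)
    (X : Finset (Fin c → A)) (act : Γ → Ω → Ω) (hinj : Function.Injective act)
    (hact : ∀ π, Function.Injective (act π))
    (hcoll : ∀ (π : Γ) (T : Tabs d c b A) x, Coll t T x → Coll t T (x ∘ act π)) :
    pr (fun T : Tabs d c b A => ∃ x : Ω → X,
      (LinearIndependent (ZMod 2) fun l => vec (x l).1) ∧ Coll t T fun l => (x l).1) *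
      (Fintype.card Γ) ≤ (X.card : ℝ) ^ Fintype.card Ω / (2 ^ b : ℝ) ^ (Fintype.card Ω - 1) := by
  classical
  refine (pr_mul_le (Y := Ω → X) _ (fun x T => (LinearIndependent (ZMod 2) fun l => vec (x l).1) ∧
    Coll t T fun l => (x l).1) _ ?_).trans ?_
  · rintro T ⟨x, hx, hT⟩
    refine ⟨Finset.univ.image fun π => x ∘ act π, ?_, ?_⟩
    · rw [Finset.card_image_of_injective, Finset.card_univ]
      intro π π' h
      apply hinj
      funext l
      have h1 := congrFun h l
      exact hx.injective (congrArg (fun y : X => vec y.1) h1)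
    · intro y hy
      obtain ⟨π, _, rfl⟩ := Finset.mem_image.1 hy
      exact ⟨hx.comp _ (hact π), hcoll π T _ hT⟩
  · refine (Finset.sum_le_sum fun x _ => pr_tree_le t fun l => (x l).1).trans (le_of_eq ?_)
    rw [Finset.sum_const, Finset.card_univ, Fintype.card_fun, Fintype.card_coe, nsmul_eq_mul]
    push_cast
    ring

/-- The leaves in each leaf bin of the witness tree can be permuted. -/
lemma pr_clean_mul_le (j₀ j' : Fin d) (K s : ℕ) (X : Finset (Fin c → A)) :
    pr (fun T : Tabs d c b A => ∃ x : Slot j₀ j' K s → X,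
      (LinearIndependent (ZMod 2) fun l => vec (x l).1) ∧
        Coll (slotTree j₀ j' K s) T fun l => (x l).1) *
      ((K.factorial : ℝ) ^ Fintype.card (LeafBin j₀ j' K s)) ≤
      (X.card : ℝ) ^ Fintype.card (Slot j₀ j' K s) /
        (2 ^ b : ℝ) ^ (Fintype.card (Slot j₀ j' K s) - 1) := by
  have h := pr_layout_mul_le (b := b) (Γ := LeafBin j₀ j' K s → Equiv.Perm (Fin K))
    (slotTree j₀ j' K s) X (fun π => Sum.map id fun p => (p.1, π p.1 p.2)) ?_ ?_ ?_
  · rw [Fintype.card_fun, Fintype.card_perm, Fintype.card_fin] at h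
    exact_mod_cast h
  · intro π π' h
    funext p
    refine Equiv.ext fun τ => ?_
    have := congrFun h (Sum.inr (p, τ))
    simpa using this
  · intro π
    refine Function.injective_id.sumMap ?_
    rintro ⟨p, τ⟩ ⟨p', τ'⟩ h
    obtain ⟨rfl, h2⟩ := Prod.mk.inj h
    have h3 : τ = τ' := (π p).injective h2
    rw [h3]
  · rintro π T x hT (o | p) hl
    · exact hT (Sum.inl o) hl
    · exact hT (Sum.inr (p.1, π p.1 p.2)) (by simp [slotTree])

/-- The star with centre `0`, all of whose edges belong to the group `j`. -/
def star (j : Fin d) (n : ℕ) : Tree d (Fin (n + 1)) where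
  root := 0
  par _ := 0
  grp _ := j
  rk i := i
  rk_lt _ hi := Fin.pos_iff_ne_zero.2 hi

/-- It is unlikely that `n + 1` independent keys have the same hash value. -/
lemma pr_star_le (j : Fin d) (n : ℕ) (X : Finset (Fin c → A)) :
    pr (fun T : Tabs d c b A => ∃ x : Fin (n + 1) → X,
      (LinearIndependent (ZMod 2) fun l => vec (x l).1) ∧ Coll (star j n) T fun l => (x l).1) ≤
      (X.card : ℝ) ^ (n + 1) / (2 ^ b : ℝ) ^ n / ((n + 1).factorial : ℝ) := by
  have h := pr_layout_mul_le (b := b) (Γ := Equiv.Perm (Fin (n + 1))) (star j n) X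
    (fun π => π) DFunLike.coe_injective (fun π => π.injective) ?_
  · rw [Fintype.card_perm, Fintype.card_fin, Nat.add_sub_cancel] at h
    rwa [le_div_iff₀ (by positivity)]
  · intro π T x hT l _
    have hT' : ∀ l, simpleTab (T j) (x l) = simpleTab (T j) (x 0) := by
      intro l
      by_cases hl : l = 0
      · rw [hl]
      · exact hT l hl
    exact (hT' _).trans (hT' _).symm

end clean

end TabChoice

/-! ### Probabilities of large loads -/

namespace TabChoice

section events

variable {α β : Type*} [DecidableEq α] [DecidableEq β] [Fintype β] {d : ℕ} {h : Fin d → α → β}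
  {L : List α} {σ : α → Fin d}

/-- A large maximum load provides many high keys in a common bin. -/
lemma exists_keys (hL : L.Nodup) {H M : ℕ} (hM : 0 < M) (hmax : H + M ≤ maxLoad h L σ) :
    ∃ (j : Fin d) (v : β) (Y : Finset α), Y.card = M ∧
      ∀ y ∈ Y, y ∈ L ∧ σ y = j ∧ h j y = v ∧ H + 1 ≤ height h L σ y := by
  obtain ⟨B, hB⟩ : ∃ B : β × Fin d, H + M ≤ loadAt h σ L B := by
    by_contra hcon
    push Not at hcon
    have : maxLoad h L σ < H + M := (Finset.sup_lt_iff (by simp; omega)).2 fun B _ => hcon B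
    omega
  have hex : ∀ i : Fin M, ∃ y ∈ L, (h (σ y) y, σ y) = B ∧ height h L σ y = H + 1 + i := fun i =>
    exists_height hL B (by omega) (by omega)
  choose y hyL hyB hyh using hex
  refine ⟨B.2, B.1, Finset.univ.image y, ?_, ?_⟩
  · rw [Finset.card_image_of_injective, Finset.card_univ, Fintype.card_fin]
    intro i i' hi
    have h1 := hyh i
    rw [hi, hyh i'] at h1
    exact Fin.ext (by omega)
  · intro z hz
    obtain ⟨i, _, rfl⟩ := Finset.mem_image.1 hz
    have h1 : σ (y i) = B.2 := congrArg Prod.snd (hyB i)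
    refine ⟨hyL i, h1, ?_, ?_⟩
    · rw [← h1]
      exact congrArg Prod.fst (hyB i)
    · rw [hyh]; omega

end events

section bounds

variable {d c b : ℕ} {A : Type} [Fintype A] [DecidableEq A] {X : Finset (Fin c → A)}
  {L : List (Fin c → A)} {σ : Tabs d c b A → (Fin c → A) → Fin d}

/-- A huge load forces many independent keys with the same hash value. -/
lemma pr_huge_le (hL : L.Nodup) (hLX : ∀ x, x ∈ L ↔ x ∈ X) (n : ℕ) :
    pr (fun T : Tabs d c b A =>
      n ^ c + 1 ≤ maxLoad (fun j x => simpleTab (T j) x) L (σ T)) ≤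
      d * ((X.card : ℝ) ^ (n + 1) / (2 ^ b : ℝ) ^ n / ((n + 1).factorial : ℝ)) := by
  refine (pr_mono ?_).trans ((pr_exists_le_card (Finset.univ : Finset (Fin d)) _ _
    fun j _ => pr_star_le (b := b) j n X).trans (by simp))
  intro T hT
  obtain ⟨j, v, Y, hY, hyY⟩ := exists_keys (H := 0) hL (Nat.succ_pos (n ^ c)) (by simpa using hT)
  obtain ⟨f, hf, hi⟩ := exists_indep Y n (by omega)
  refine ⟨j, Finset.mem_univ _, fun i => ⟨f i, (hLX _).1 (hyY _ (hf i)).1⟩, hi, ?_⟩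
  intro l _
  exact (hyY _ (hf l)).2.2.1.trans (hyY _ (hf 0)).2.2.1.symm

set_option synthInstance.maxSize 2000 in
/-- A load that exceeds `K + s` by a constant is witnessed by an independent layout of a
witness tree, a bad code, or a colliding heavy difference. -/
lemma load_witness (hc : 1 ≤ c) (hL : L.Nodup) (hLX : ∀ x, x ∈ L ↔ x ∈ X)
    (hσ : ∀ T, alwaysGoLeftPlacement (fun j x => simpleTab (T j) x) L (σ T))
    (f : Fin d → Fin d) (hf : ∀ j, f j ≠ j) (K s : ℕ) (R : ℝ) (T : Tabs d c b A)
    (hT : K + s + 1 + (4 ^ c + 1) ≤ maxLoad (fun j x => simpleTab (T j) x) L (σ T)) :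
    ∃ j : Fin d, (∃ x : Slot j (f j) K s → X, (LinearIndependent (ZMod 2) fun l => vec (x l).1) ∧
        Coll (slotTree j (f j) K s) T fun l => (x l).1) ∨
      (∃ S I I' J J' P P', BadCode X (slotTree j (f j) K s).forest S R I I' J J' P P' T) ∨
      Heavy X R T := by
  obtain ⟨j, v, Y, hY, hyY⟩ := exists_keys hL (Nat.succ_pos (4 ^ c)) hT
  obtain ⟨y, hy, hi⟩ := exists_indep Y 4 (by omega)
  have hw := fun i => exists_witness hL (hσ T) (hf j) K s (hyY _ (hy i)).1 (hyY _ (hy i)).2.1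
    (hyY _ (hy i)).2.2.2
  choose κ hroot hκL hcoll hne using hw
  let κ' : Fin 5 × Slot j (f j) K s → X := fun p => ⟨κ p.1 p.2, (hLX _).1 (hκL _ _)⟩
  have hD := dichotomy hc (slotTree j (f j) K s) (slotTree_grp_ne K s (hf j)) X T κ'
    (fun i l hl => hcoll i l hl) ?_ ?_ ?_ R
  · refine ⟨j, hD.imp_left ?_⟩
    rintro ⟨i, h⟩
    exact ⟨fun l => κ' (i, l), h, fun l hl => hcoll i l hl⟩
  · intro i
    have h1 : ∀ i, simpleTab (T j) (κ i (slotTree j (f j) K s).root) = v := fun i => by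
      rw [hroot]; exact (hyY _ (hy i)).2.2.1
    exact (h1 i).trans (h1 0).symm
  · simpa only [κ', hroot] using hi
  · intro i l l' hl hll h
    exact hne i l l' hl hll (congrArg Subtype.val h)

set_option synthInstance.maxSize 2000 in
/-- The probability of a load that exceeds `K + s` by a constant, provided that the gain `K!` from
every leaf bin absorbs `C₁` for every slot and a factor `2 ^ (2 * b)`, half of which is used up by
the free choice of the root. Here `ρ = 2 ^ (b / 4)`. -/
lemma pr_load_le (hd : 2 ≤ d) (hc : 1 ≤ c) (hL : L.Nodup) (hLX : ∀ x, x ∈ L ↔ x ∈ X)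
    (hσ : ∀ T, alwaysGoLeftPlacement (fun j x => simpleTab (T j) x) L (σ T)) {C₁ ρ : ℝ}
    (hC : 1 ≤ C₁) (hρ : 1 ≤ ρ) (hρb : ρ ^ 4 = 2 ^ b) (hm : (X.card : ℝ) ≤ C₁ * 2 ^ b) {K s k : ℕ}
    (hk : ∀ j j' : Fin d, Fintype.card (Slot j j' K s) ≤ k)
    (hfac : ∀ j j' : Fin d, C₁ ^ Fintype.card (Slot j j' K s) * (2 ^ b) ^ 2 ≤
      (K.factorial : ℝ) ^ Fintype.card (LeafBin j j' K s)) :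
    pr (fun T : Tabs d c b A =>
      K + s + 1 + (4 ^ c + 1) ≤ maxLoad (fun j x => simpleTab (T j) x) L (σ T)) ≤
      d * (1 / 2 ^ b + (5 * d ^ 2 * (720 ^ c) ^ 2 * C₁ ^ 3 * (32 * C₁) ^ (5 * k) / ρ +
        d * 720 ^ c / ρ)) := by
  have hne : ∀ J : Fin d, ∃ J', J' ≠ J := fun J => by
    have : Nontrivial (Fin d) := Fin.nontrivial_iff_two_le.2 hd
    exact exists_ne J
  choose f hf using hne
  have hρ0 : 0 < ρ := by linarith
  refine (pr_mono fun T hT => ?_).trans ((pr_exists_le_card (Finset.univ : Finset (Fin d))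
    (fun j T => (∃ x : Slot j (f j) K s → X, (LinearIndependent (ZMod 2) fun l => vec (x l).1) ∧
        Coll (slotTree j (f j) K s) T fun l => (x l).1) ∨
      (∃ S I I' J J' P P', BadCode X (slotTree j (f j) K s).forest S (C₁ * (2 ^ b / ρ))
        I I' J J' P P' T) ∨ Heavy X (C₁ * (2 ^ b / ρ)) T)
    (1 / 2 ^ b + (5 * d ^ 2 * (720 ^ c) ^ 2 * C₁ ^ 3 * (32 * C₁) ^ (5 * k) / ρ +
      d * 720 ^ c / ρ)) ?_).trans (by rw [Finset.card_univ, Fintype.card_fin]))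
  · obtain ⟨j, h⟩ := load_witness hc hL hLX hσ f hf K s (C₁ * (2 ^ b / ρ)) T hT
    exact ⟨j, Finset.mem_univ _, h⟩
  · intro j _
    refine (pr_or_le _ _).trans (add_le_add ?_ ((pr_or_le _ _).trans (add_le_add ?_ ?_)))
    · have h1 := pr_clean_mul_le (b := b) j (f j) K s X
      have hpos : 1 ≤ Fintype.card (Slot j (f j) K s) :=
        Fintype.card_pos_iff.2 ⟨(slotTree j (f j) K s).root⟩
      obtain ⟨n, hn⟩ : ∃ n, Fintype.card (Slot j (f j) K s) = n + 1 := ⟨_, (Nat.sub_add_cancel hpos).symm⟩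
      have h2 := hfac j (f j)
      rw [hn] at h1 h2
      rw [Nat.add_sub_cancel] at h1
      set p := pr fun T : Tabs d c b A => ∃ x : Slot j (f j) K s → X,
        (LinearIndependent (ZMod 2) fun l => vec (x l).1) ∧
          Coll (slotTree j (f j) K s) T fun l => (x l).1
      have hp : 0 ≤ p := pr_nonneg _
      have h3 : p * (C₁ ^ (n + 1) * (2 ^ b) ^ 2) ≤ C₁ ^ (n + 1) * 2 ^ b := by
        refine (mul_le_mul_of_nonneg_left h2 hp).trans (h1.trans ?_)
        rw [div_le_iff₀ (by positivity)]
        calc (X.card : ℝ) ^ (n + 1) ≤ (C₁ * 2 ^ b) ^ (n + 1) := by gcongr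
          _ = _ := by ring
      rw [le_div_iff₀ (by positivity)]
      have h4 : 0 < C₁ ^ (n + 1) * (2 : ℝ) ^ b := by positivity
      refine le_of_mul_le_mul_right ?_ h4
      calc p * 2 ^ b * (C₁ ^ (n + 1) * 2 ^ b) = p * (C₁ ^ (n + 1) * (2 ^ b) ^ 2) := by ring
        _ ≤ _ := h3
        _ = _ := by ring
    · refine (pr_exists_badCode_le X _ hC hρ hρb hm).trans ?_
      rw [Fintype.card_prod, Fintype.card_fin]
      gcongr
      · linarith
      · exact hk _ _
    · exact pr_heavy_le X hC hρ hρb hm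

end bounds

end TabChoice

/-! ### The expectation of the maximum load -/

namespace TabChoice

section assembly

variable {d c b : ℕ} {A : Type} [Fintype A] [DecidableEq A] {X : Finset (Fin c → A)}
  {L : List (Fin c → A)} {σ : Tabs d c b A → (Fin c → A) → Fin d}

omit [Fintype A] in
lemma maxLoad_le_card (hL : L.Nodup) (hLX : ∀ x, x ∈ L ↔ x ∈ X)
    (h : Fin d → (Fin c → A) → (Fin b → ZMod 2)) (τ : (Fin c → A) → Fin d) :
    maxLoad h L τ ≤ X.card := by
  have h1 : L.length = X.card := by
    rw [← List.toFinset_card_of_nodup hL]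
    congr 1
    ext x
    rw [List.mem_toFinset, hLX]
  rw [← h1]
  exact Finset.sup_le fun B _ => List.length_filter_le _ _

/-- Splitting of an expectation at two thresholds. -/
lemma mean_le {m : ℕ} (f : Tabs d c b A → ℕ) (hf : ∀ T, f T ≤ m) (l n : ℕ) :
    (∑ T, (f T : ℝ)) / (Fintype.card (Tabs d c b A) : ℝ) ≤
      l + n * pr (fun T => l ≤ f T) + m * pr (fun T => n + 1 ≤ f T) := by
  classical
  have h0 : (0 : ℝ) < (Fintype.card (Tabs d c b A) : ℝ) := card_pos_tabs
  have h1 : ∀ T, (f T : ℝ) ≤ l + n * (if l ≤ f T then 1 else 0) +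
      m * (if n + 1 ≤ f T then 1 else 0) := by
    intro T
    have hm : (f T : ℝ) ≤ m := Nat.cast_le.2 (hf T)
    have hl : (0 : ℝ) ≤ l := Nat.cast_nonneg l
    have hn : (0 : ℝ) ≤ n := Nat.cast_nonneg n
    by_cases h1 : l ≤ f T
    · by_cases h2 : n + 1 ≤ f T
      · rw [if_pos h1, if_pos h2]; linarith
      · have : (f T : ℝ) ≤ n := Nat.cast_le.2 (by omega)
        rw [if_pos h1, if_neg h2]; linarith
    · have : (f T : ℝ) ≤ l := Nat.cast_le.2 (by omega)
      by_cases h2 : n + 1 ≤ f T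
      · rw [if_neg h1, if_pos h2]; linarith [Nat.cast_nonneg (α := ℝ) m]
      · rw [if_neg h1, if_neg h2]; linarith
  rw [div_le_iff₀ h0]
  refine (Finset.sum_le_sum fun T _ => h1 T).trans (le_of_eq ?_)
  rw [Finset.sum_add_distrib, Finset.sum_add_distrib, ← Finset.mul_sum, ← Finset.mul_sum,
    Finset.sum_boole, Finset.sum_boole, Finset.sum_const, Finset.card_univ, nsmul_eq_mul,
    pr_eq, pr_eq]
  field_simp

/-- The contribution of huge loads to the expectation is bounded. -/
lemma huge_term_le (hL : L.Nodup) (hLX : ∀ x, x ∈ L ↔ x ∈ X) {C₁ : ℝ} (hC : 1 ≤ C₁)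
    (hm : (X.card : ℝ) ≤ C₁ * 2 ^ b) :
    X.card * pr (fun T : Tabs d c b A =>
      b ^ c + 1 ≤ maxLoad (fun j x => simpleTab (T j) x) L (σ T)) ≤
      d * C₁ ^ 2 * Real.exp (4 * C₁) := by
  have h1 : (C₁ * 4) ^ b / (b.factorial : ℝ) ≤ Real.exp (4 * C₁) := by
    rw [mul_comm 4]
    exact Real.pow_div_factorial_le_exp _ (by positivity) b
  have h2 : ((b.factorial : ℕ) : ℝ) ≤ ((b + 1).factorial : ℝ) :=
    Nat.cast_le.2 (Nat.factorial_le (Nat.le_succ b))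
  calc _ ≤ (C₁ * 2 ^ b) * (d * ((C₁ * 2 ^ b) ^ (b + 1) / (2 ^ b : ℝ) ^ b / (b.factorial : ℝ))) := by
        refine mul_le_mul hm ((pr_huge_le hL hLX b).trans ?_) (pr_nonneg _) (by positivity)
        gcongr
    _ = d * C₁ ^ 2 * ((C₁ * 4) ^ b / (b.factorial : ℝ)) := by
        have : (4 : ℝ) ^ b = 2 ^ b * 2 ^ b := by rw [← mul_pow]; norm_num
        rw [mul_pow C₁ 4, this]
        field_simp
        ring
    _ ≤ _ := by gcongr

/-- The number of leaves `K` is large enough for the gain `K!` at every leaf bin to absorb a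
constant factor for every slot. -/
lemma exists_factorial (x : ℝ) (hx : 1 ≤ x) : ∃ K : ℕ, x ^ (K + 1) ≤ (K.factorial : ℝ) := by
  have h := FloorSemiring.tendsto_pow_div_factorial_atTop x
  have hx0 : 0 < x := by linarith
  obtain ⟨K, hK⟩ := (h.eventually (gt_mem_nhds (inv_pos.2 hx0))).exists
  refine ⟨K, ?_⟩
  rw [div_lt_iff₀ (by positivity), inv_mul_eq_div, lt_div_iff₀ hx0] at hK
  rw [pow_succ]
  exact hK.le

lemma exists_eighth_root : ∃ τ : ℝ, 1 < τ ∧ τ ^ 8 = 2 := by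
  refine ⟨2 ^ ((1 : ℝ) / 8), Real.one_lt_rpow (by norm_num) (by norm_num), ?_⟩
  rw [← Real.rpow_natCast, ← Real.rpow_mul (by norm_num)]
  norm_num

lemma exists_pow_bound (c : ℕ) {τ : ℝ} (hτ : 1 < τ) :
    ∃ M : ℝ, ∀ b : ℕ, (b : ℝ) ^ c / τ ^ b ≤ M := by
  obtain ⟨M, hM⟩ := (tendsto_pow_const_div_const_pow_of_one_lt c hτ).bddAbove_range
  exact ⟨M, fun b => hM ⟨b, rfl⟩⟩

/-- The number of rounds `s` of the witness tree for hash values of `b` bits. -/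
lemma exists_rounds {D P : ℝ} (hD : 1 ≤ D) (hP : 1 < P) (hb : D ≤ b) :
    ∃ s : ℕ, D * P ^ s ≤ b ∧ (b : ℝ) < D * P ^ (s + 1) := by
  have hD0 : 0 < D := by linarith
  obtain ⟨s, h1, h2⟩ := exists_nat_pow_near (x := (b : ℝ) / D) (by rwa [one_le_div hD0]) hP
  refine ⟨s, ?_, ?_⟩
  · rw [le_div_iff₀ hD0] at h1; linarith
  · rw [div_lt_iff₀ hD0] at h2; linarith

/-- The number of rounds is at most the main term of the bound, since `b ≤ log₂ n`. -/
lemma rounds_le {φ : ℝ} (hd : 2 ≤ d) (hφ : 1 < φ) {s : ℕ} (h : (φ ^ d) ^ s ≤ b) :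
    (s : ℝ) ≤ Real.logb 2 (Real.logb 2 ((d : ℝ) * 2 ^ b)) / ((d : ℝ) * Real.logb 2 φ) := by
  have hd0 : (2 : ℝ) ≤ d := by exact_mod_cast hd
  have hl : 0 < Real.logb 2 φ := Real.logb_pos (by norm_num) hφ
  have h1 : (b : ℝ) ≤ Real.logb 2 ((d : ℝ) * 2 ^ b) := by
    rw [Real.le_logb_iff_rpow_le (by norm_num) (by positivity), Real.rpow_natCast]
    exact le_mul_of_one_le_left (by positivity) (by linarith)
  rw [le_div_iff₀ (by positivity)]
  have h2 : 0 < (φ ^ d) ^ s := by positivity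
  calc (s : ℝ) * (d * Real.logb 2 φ) = Real.logb 2 ((φ ^ d) ^ s) := by
        rw [Real.logb_pow, Real.logb_pow]
    _ ≤ _ := Real.logb_le_logb_of_le (by norm_num) h2 (h.trans h1)

lemma main_term_nonneg {φ : ℝ} (hd : 2 ≤ d) (hφ : 1 < φ) (hb : 1 ≤ b) :
    0 ≤ Real.logb 2 (Real.logb 2 ((d : ℝ) * 2 ^ b)) / ((d : ℝ) * Real.logb 2 φ) := by
  have := rounds_le (b := b) (s := 0) hd hφ (by simpa using hb)
  simpa using this

/-- The contribution of large loads to the expectation is bounded, when the witness tree has a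
number of slots that is a small multiple of `b`. -/
lemma load_term_le (hd : 2 ≤ d) (hc : 1 ≤ c) (hL : L.Nodup) (hLX : ∀ x, x ∈ L ↔ x ∈ X)
    (hσ : ∀ T, alwaysGoLeftPlacement (fun j x => simpleTab (T j) x) L (σ T)) {C₁ τ M : ℝ}
    (hC : 1 ≤ C₁) (hτ : 1 < τ) (hτ8 : τ ^ 8 = 2) (hM : (b : ℝ) ^ c / τ ^ b ≤ M)
    (hm : (X.card : ℝ) ≤ C₁ * 2 ^ b) {K s N W : ℕ} {φ : ℝ} (hN : 32 * C₁ ≤ 2 ^ N)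
    (hφ0 : 0 < φ) (hφ : φ ^ d = ∑ i ∈ Finset.range d, φ ^ i)
    (hW : 80 * N * (d * φ ^ (d + 1)) * (φ ^ d) ^ 2 ≤ W)
    (hK : (C₁ * 2 ^ W) ^ (K + 1) ≤ (K.factorial : ℝ))
    (hs : 40 * N * (K + 1) * (d * φ ^ (d + 1)) * (φ ^ d) ^ s ≤ b)
    (hs' : (b : ℝ) < 40 * N * (K + 1) * (d * φ ^ (d + 1)) * (φ ^ d) ^ (s + 1)) :
    (b : ℝ) ^ c * pr (fun T : Tabs d c b A =>
      K + s + 1 + (4 ^ c + 1) ≤ maxLoad (fun j x => simpleTab (T j) x) L (σ T)) ≤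
      d * (1 + (5 * d ^ 2 * (720 ^ c) ^ 2 * C₁ ^ 3 + d * 720 ^ c)) * M := by
  have hN0 : 0 < N := by
    rcases Nat.eq_zero_or_pos N with rfl | h
    · norm_num at hN; linarith
    · exact h
  have hτ1 : 1 ≤ τ ^ b := one_le_pow₀ hτ.le
  have h2b : (2 : ℝ) ^ b = ((τ ^ b) ^ 2) ^ 4 := by
    rw [← hτ8]; ring
  have key := pr_load_le (b := b) (ρ := (τ ^ b) ^ 2) (K := K) (s := s) (k := b / (40 * N))
    hd hc hL hLX hσ hC (one_le_pow₀ hτ1) h2b.symm hm ?_ ?_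
  · have hpow : (32 * C₁) ^ (5 * (b / (40 * N))) ≤ τ ^ b := by
      calc (32 * C₁) ^ (5 * (b / (40 * N))) ≤ (2 ^ N) ^ (5 * (b / (40 * N))) := by gcongr
        _ = τ ^ (40 * N * (b / (40 * N))) := by
            rw [← hτ8, ← pow_mul, ← pow_mul]; congr 1; ring
        _ ≤ τ ^ b := pow_le_pow_right₀ hτ.le (Nat.mul_div_le _ _)
    have h1 : 1 / (2 : ℝ) ^ b ≤ 1 / τ ^ b := by
      rw [h2b]
      refine one_div_le_one_div_of_le (by positivity) ?_
      rw [← pow_mul]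
      exact le_self_pow₀ hτ1 (by norm_num)
    have h2 : 5 * d ^ 2 * (720 ^ c) ^ 2 * C₁ ^ 3 * (32 * C₁) ^ (5 * (b / (40 * N))) / (τ ^ b) ^ 2 ≤
        5 * d ^ 2 * (720 ^ c) ^ 2 * C₁ ^ 3 / τ ^ b := by
      calc _ ≤ 5 * d ^ 2 * (720 ^ c) ^ 2 * C₁ ^ 3 * τ ^ b / (τ ^ b) ^ 2 := by gcongr
        _ = _ := by field_simp
    have h3 : (d : ℝ) * 720 ^ c / (τ ^ b) ^ 2 ≤ d * 720 ^ c / τ ^ b := by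
      gcongr
      exact le_self_pow₀ hτ1 (by norm_num)
    calc _ ≤ (b : ℝ) ^ c * (d * (1 / τ ^ b + (5 * d ^ 2 * (720 ^ c) ^ 2 * C₁ ^ 3 / τ ^ b +
          d * 720 ^ c / τ ^ b))) := by
          refine mul_le_mul_of_nonneg_left (key.trans ?_) (by positivity)
          gcongr
      _ = d * (1 + (5 * d ^ 2 * (720 ^ c) ^ 2 * C₁ ^ 3 + d * 720 ^ c)) *
          ((b : ℝ) ^ c / τ ^ b) := by ring
      _ ≤ _ := by gcongr
  · intro j j'
    rw [Nat.le_div_iff_mul_le (by positivity), mul_comm]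
    have h1 : (Fintype.card (Slot j j' K s) : ℝ) ≤
        (K + 1) * (Fintype.card (LeafBin j j' K s) : ℝ) := by
      have := Nat.cast_le (α := ℝ) |>.2 (card_slot_le (j₀ := j) (j' := j') K s hd)
      rwa [Nat.cast_mul, Nat.cast_add, Nat.cast_one] at this
    have h2 := card_leafBin_le_pow (j₀ := j) (j' := j') K s hd hφ0 hφ
    refine Nat.cast_le (α := ℝ) |>.1 ?_
    rw [Nat.cast_mul, Nat.cast_mul]
    refine le_trans ?_ hs
    calc _ ≤ ((40 : ℕ) : ℝ) * N * ((K + 1) * (d * φ ^ (d + 1) * (φ ^ d) ^ s)) := by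
          refine mul_le_mul_of_nonneg_left (h1.trans ?_) (by positivity)
          gcongr
      _ = _ := by push_cast; ring
  · intro j j'
    have h1 := card_slot_le (j₀ := j) (j' := j') K s hd
    have h2 := pow_le_card_leafBin (j₀ := j) (j' := j') K s hd hφ0 hφ
    set l := Fintype.card (LeafBin j j' K s)
    have h3 : 2 * b ≤ W * ((K + 1) * l) := by
      refine Nat.cast_le (α := ℝ) |>.1 ?_
      rw [Nat.cast_mul, Nat.cast_mul, Nat.cast_mul, Nat.cast_add, Nat.cast_one, Nat.cast_two]
      calc 2 * (b : ℝ) ≤ 2 * (40 * N * (K + 1) * (d * φ ^ (d + 1)) * (φ ^ d) ^ (s + 1)) := by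
            linarith
        _ = 80 * N * (K + 1) * (d * φ ^ (d + 1)) * φ ^ d * (φ ^ d) ^ s := by ring
        _ ≤ 80 * N * (K + 1) * (d * φ ^ (d + 1)) * φ ^ d * (φ ^ d * l) := by gcongr
        _ = 80 * N * (d * φ ^ (d + 1)) * (φ ^ d) ^ 2 * ((K + 1) * l) := by ring
        _ ≤ _ := by gcongr
    calc C₁ ^ Fintype.card (Slot j j' K s) * (2 ^ b) ^ 2
        ≤ C₁ ^ ((K + 1) * l) * (2 ^ W) ^ ((K + 1) * l) := by
          refine mul_le_mul (pow_le_pow_right₀ hC h1) ?_ (by positivity) (by positivity)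
          rw [← pow_mul, ← pow_mul]
          exact pow_le_pow_right₀ (by norm_num) (by linarith)
      _ = ((C₁ * 2 ^ W) ^ (K + 1)) ^ l := by rw [← mul_pow, pow_mul]
      _ ≤ _ := by gcongr

end assembly

end TabChoice

open TabChoice in
theorem stmt1 (d c : ℕ) (hd : 2 ≤ d) (hc : 1 ≤ c) (C : ℝ) (hC : 0 < C)
    (φ : ℝ) (hφ0 : 0 < φ) (hφ : φ ^ d = ∑ i ∈ Finset.range d, φ ^ i) :
    ∃ K : ℝ, ∀ b : ℕ, 1 ≤ b → ∀ (A : Type) [Fintype A] [DecidableEq A],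
      ∀ X : Finset (Fin c → A), (X.card : ℝ) ≤ C * ((d : ℝ) * 2 ^ b) →
      ∀ L : List (Fin c → A), L.Nodup → (∀ x, x ∈ L ↔ x ∈ X) →
      ∀ σ : (Fin d → Fin c → A → (Fin b → ZMod 2)) → (Fin c → A) → Fin d,
        (∀ T, alwaysGoLeftPlacement (fun j x => simpleTab (T j) x) L (σ T)) →
        (∑ T : Fin d → Fin c → A → (Fin b → ZMod 2),
            (maxLoad (fun j x => simpleTab (T j) x) L (σ T) : ℝ)) /
          (Fintype.card (Fin d → Fin c → A → (Fin b → ZMod 2)) : ℝ) ≤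
          Real.logb 2 (Real.logb 2 ((d : ℝ) * 2 ^ b)) / ((d : ℝ) * Real.logb 2 φ) + K := by
  have hφ1 : 1 < φ := one_lt_phi hd hφ0 hφ
  obtain ⟨C₁, hC₁, hCd⟩ : ∃ C₁ : ℝ, 1 ≤ C₁ ∧ C * d ≤ C₁ := ⟨max 1 (C * d), le_max_left _ _,
    le_max_right _ _⟩
  obtain ⟨τ, hτ, hτ8⟩ := exists_eighth_root
  obtain ⟨M, hM⟩ := exists_pow_bound c hτ
  -- For a tree with at most `b / (40 * N)` slots, the factor `(32 * C₁) ^ (5 * slots)` of the bad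
  -- codes is at most `τ ^ b = 2 ^ (b / 8)`.
  obtain ⟨N, hN⟩ := pow_unbounded_of_one_lt (32 * C₁) (one_lt_two)
  -- `W` is such that `2 ^ W` for every slot makes up for `2 ^ (2 * b)`. It does not depend on `K`,
  -- so `K` can be chosen afterwards such that `K!` absorbs `C₁ * 2 ^ W` for `K + 1` slots.
  obtain ⟨W, hW⟩ := exists_nat_ge (80 * N * (d * φ ^ (d + 1)) * (φ ^ d) ^ 2 : ℝ)
  obtain ⟨K, hK⟩ := exists_factorial (C₁ * 2 ^ W)
    (one_le_mul_of_one_le_of_one_le hC₁ (one_le_pow₀ one_le_two))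
  -- the tree with `s` rounds is small enough if `D * (φ ^ d) ^ s ≤ b`
  obtain ⟨D, hD⟩ : ∃ D : ℝ, D = 40 * N * (K + 1) * (d * φ ^ (d + 1)) := ⟨_, rfl⟩
  have hD1 : 1 ≤ D := by
    have hN1 : (1 : ℝ) ≤ N := by
      rcases Nat.eq_zero_or_pos N with rfl | h
      · norm_num at hN; linarith
      · exact_mod_cast h
    have hK1 : (1 : ℝ) ≤ K + 1 := by linarith [Nat.cast_nonneg (α := ℝ) K]
    have hd1 : (1 : ℝ) ≤ d := by exact_mod_cast (by omega : 1 ≤ d)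
    have hφ2 : 1 ≤ φ ^ (d + 1) := one_le_pow₀ hφ1.le
    rw [hD]
    refine one_le_mul_of_one_le_of_one_le (one_le_mul_of_one_le_of_one_le ?_ hK1)
      (one_le_mul_of_one_le_of_one_le hd1 hφ2)
    linarith
  have hM0 : 0 ≤ M := le_trans (by positivity) (hM 1)
  refine ⟨(K + 1 + (4 ^ c + 1)) +
    d * (1 + (5 * d ^ 2 * (720 ^ c) ^ 2 * C₁ ^ 3 + d * 720 ^ c)) * M +
    d * C₁ ^ 2 * Real.exp (4 * C₁) + C₁ * 2 ^ ⌈D⌉₊, ?_⟩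
  intro b hb A _ _ X hX L hL hLX σ hσ
  have hm : (X.card : ℝ) ≤ C₁ * 2 ^ b := by
    refine hX.trans ?_
    rw [← mul_assoc]
    gcongr
  have hle := fun T => maxLoad_le_card hL hLX (fun j x => simpleTab (T j) x) (σ T)
  by_cases hbD : D ≤ b
  · obtain ⟨s, hs, hs'⟩ := exists_rounds hD1 (one_lt_pow₀ hφ1 (by omega : d ≠ 0)) hbD
    have h1 := mean_le _ hle (K + s + 1 + (4 ^ c + 1)) (b ^ c)
    have h2 := huge_term_le (σ := σ) hL hLX hC₁ hm
    have h3 := load_term_le (s := s) hd hc hL hLX hσ hC₁ hτ hτ8 (hM b) hm hN.le hφ0 hφ hW hK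
      (by rw [← hD]; exact hs) (by rw [← hD]; exact hs')
    have h4 := rounds_le (b := b) (s := s) hd hφ1
      ((le_mul_of_one_le_left (by positivity) hD1).trans hs)
    have h5 : 0 ≤ C₁ * 2 ^ ⌈D⌉₊ := by positivity
    push_cast at h1
    linarith
  · -- for small `b` the number of keys is bounded
    have h4 := main_term_nonneg (b := b) hd hφ1 hb
    have h5 : (X.card : ℝ) ≤ C₁ * 2 ^ ⌈D⌉₊ := by
      refine hm.trans ?_
      gcongr
      · norm_num
      · exact Nat.cast_le (α := ℝ) |>.1 ((not_le.1 hbD).le.trans (Nat.le_ceil D))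
    have h6 : (∑ T : Tabs d c b A, (maxLoad (fun j x => simpleTab (T j) x) L (σ T) : ℝ)) /
        (Fintype.card (Tabs d c b A) : ℝ) ≤ X.card := by
      rw [div_le_iff₀ card_pos_tabs]
      refine (Finset.sum_le_sum fun T _ => Nat.cast_le.2 (hle T)).trans (le_of_eq ?_)
      rw [Finset.sum_const, Finset.card_univ, nsmul_eq_mul, mul_comm]
    have h7 : (0 : ℝ) ≤ (K + 1 + (4 ^ c + 1)) +
        d * (1 + (5 * d ^ 2 * (720 ^ c) ^ 2 * C₁ ^ 3 + d * 720 ^ c)) * M +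
        d * C₁ ^ 2 * Real.exp (4 * C₁) := by positivity
    linarith
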